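/- arXiv:1704.07650 — 4 statements merged into one kernel-verified Lean document; each statement's English description precedes it below -/
import Mathlib

section
/- Let N ≥ 3, α > 0, and let Ω ⊆ ℝ^N be open with 0 ∉ closure(Ω). Let 2 ≤ p < 2 + 4/α, set β = (N−2)α(p−2)/4 and ℓ = √( (p−2)²/(4(p−1)) + (p(p−2)/4) · (2 + 4/α − p)^{−1} ). Then for every smooth compactly supported function u : Ω → ℂ, the integral I(u) = ∫_Ω (−Δu(x)) · conj(u(x)) · |u(x)|^{p−2} · |x|^{−β} dx satisfies | Im I(u) | ≤ ℓ · Re I(u); in particular Re I(u) ≥ 0. -/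
open MeasureTheory
open scoped Topology

section NormPower

variable {E : Type*} [NormedAddCommGroup E] [InnerProductSpace ℝ E]

theorem hasFDerivAt_norm_rpow_of_ne_zero {x : E} (hx : x ≠ 0) (p : ℝ) :
    HasFDerivAt (fun y : E ↦ ‖y‖ ^ p) ((p * ‖x‖ ^ (p - 2)) • innerSL ℝ x) x := by
  have hpos : 0 < ‖x‖ := norm_pos_iff.mpr hx
  have h := ((hasFDerivAt_id x).norm_sq).rpow_const (p := p / 2)
    (Or.inl (by simpa using hx))
  have e : (fun y : E ↦ (‖id y‖ ^ 2) ^ (p / 2)) = fun y ↦ ‖y‖ ^ p := by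
    funext y
    rw [id, ← Real.rpow_natCast, ← Real.rpow_mul (norm_nonneg y)]
    congr 1
    push_cast
    ring
  rw [e] at h
  convert h using 1
  ext v
  have e2 : (‖x‖ ^ 2) ^ (p / 2 - 1) = ‖x‖ ^ (p - 2) := by
    rw [← Real.rpow_natCast, ← Real.rpow_mul hpos.le]
    congr 1
    push_cast
    ring
  simp [e2]
  ring

/-- The derivative of `y ↦ ‖y‖ ^ q • y` at `x`. -/
noncomputable def normRpowSmulDeriv (q : ℝ) (x : E) : E →L[ℝ] E :=
  ‖x‖ ^ q • ContinuousLinearMap.id ℝ E + (q * ‖x‖ ^ (q - 2)) • (innerSL ℝ x).smulRight x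

theorem hasFDerivAt_norm_rpow_smul {q : ℝ} (hq : 0 ≤ q) (x : E) :
    HasFDerivAt (fun y : E ↦ ‖y‖ ^ q • y) (normRpowSmulDeriv q x) x := by
  rcases hq.eq_or_lt with rfl | hq
  · simpa [normRpowSmulDeriv, Function.id_def] using hasFDerivAt_id (𝕜 := ℝ) x
  rcases eq_or_ne x 0 with rfl | hx
  · have : normRpowSmulDeriv q (0 : E) = 0 := by
      simp [normRpowSmulDeriv, Real.zero_rpow hq.ne']
    rw [this, hasFDerivAt_iff_isLittleO_nhds_zero]
    have h0 : Filter.Tendsto (fun h : E ↦ ‖h‖ ^ q) (𝓝 0) (𝓝 0) := by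
      have : Continuous fun h : E ↦ ‖h‖ ^ q := continuous_norm.rpow_const fun _ ↦ Or.inr hq.le
      simpa [Real.zero_rpow hq.ne'] using this.tendsto 0
    have := ((Asymptotics.isLittleO_one_iff ℝ).mpr h0).smul_isBigO
      (Asymptotics.isBigO_refl (fun h : E ↦ h) (𝓝 0))
    simpa using this
  · refine ((hasFDerivAt_norm_rpow_of_ne_zero hx q).smul (hasFDerivAt_id x)).congr_fderiv ?_
    ext v
    simp [normRpowSmulDeriv, smul_smul]

theorem continuous_normRpowSmulDeriv {q : ℝ} (hq : 0 ≤ q) :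
    Continuous (normRpowSmulDeriv (E := E) q) := by
  rcases hq.eq_or_lt with rfl | hq
  · have : normRpowSmulDeriv (E := E) 0 = fun _ ↦ ContinuousLinearMap.id ℝ E := by
      funext x
      simp [normRpowSmulDeriv]
    rw [this]
    exact continuous_const
  have hc : Continuous fun h : E ↦ ‖h‖ ^ q := continuous_norm.rpow_const fun _ ↦ Or.inr hq.le
  refine (hc.smul continuous_const).add (continuous_iff_continuousAt.mpr fun x ↦ ?_)
  rcases eq_or_ne x 0 with rfl | hx
  · have h0 : Filter.Tendsto (fun h : E ↦ q * ‖h‖ ^ q) (𝓝 0) (𝓝 0) := by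
      simpa [Real.zero_rpow hq.ne'] using (hc.const_mul q).tendsto 0
    simp only [ContinuousAt, map_zero, ContinuousLinearMap.smulRight_zero, smul_zero]
    refine squeeze_zero_norm (fun x ↦ ?_) h0
    rw [norm_smul, ContinuousLinearMap.norm_smulRight_apply, innerSL_apply_norm, norm_mul,
      Real.norm_of_nonneg hq.le, Real.norm_of_nonneg (by positivity), mul_assoc]
    rcases eq_or_ne x 0 with rfl | hx
    · simp [Real.zero_rpow hq.ne']
    · have hx' : 0 < ‖x‖ := norm_pos_iff.mpr hx
      rw [Real.rpow_sub hx', Real.rpow_two]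
      apply le_of_eq
      field_simp
  · have h1 : ContinuousAt (fun y : E ↦ q * ‖y‖ ^ (q - 2)) x :=
      continuousAt_const.mul
        (continuous_norm.continuousAt.rpow_const (Or.inl (norm_ne_zero_iff.mpr hx)))
    have h2 : Continuous fun y : E ↦ (innerSL ℝ y).smulRight y := by
      fun_prop
    exact h1.smul h2.continuousAt

theorem contDiff_norm_rpow_smul {q : ℝ} (hq : 0 ≤ q) :
    ContDiff ℝ 1 (fun y : E ↦ ‖y‖ ^ q • y) :=
  contDiff_one_iff_hasFDerivAt.mpr
    ⟨_, continuous_normRpowSmulDeriv hq, hasFDerivAt_norm_rpow_smul hq⟩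

end NormPower

theorem integrable_fderiv_apply {E F : Type*} [NormedAddCommGroup E] [NormedSpace ℝ E]
    [MeasurableSpace E] [OpensMeasurableSpace E] [NormedAddCommGroup F] [NormedSpace ℝ F]
    {μ : Measure E} [IsFiniteMeasureOnCompacts μ]
    {f : E → F} (hf : ContDiff ℝ 1 f) (hc : HasCompactSupport f) (v : E) :
    Integrable (fun x ↦ fderiv ℝ f x v) μ :=
  ((hf.continuous_fderiv one_ne_zero).clm_apply continuous_const).integrable_of_hasCompactSupport
    (hc.fderiv_apply (𝕜 := ℝ) v)

theorem integral_fderiv_apply_eq_zero {E F : Type*} [NormedAddCommGroup E] [NormedSpace ℝ E]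
    [FiniteDimensional ℝ E] [MeasurableSpace E] [BorelSpace E]
    [NormedAddCommGroup F] [NormedSpace ℝ F] (μ : Measure E) [μ.IsAddHaarMeasure]
    {f : E → F} (hf : ContDiff ℝ 1 f) (hc : HasCompactSupport f) (v : E) :
    ∫ x, fderiv ℝ f x v ∂μ = 0 := by
  have h := integral_smul_fderiv_eq_neg_fderiv_smul_of_integrable (𝕜 := ℝ) (μ := μ)
    (f := fun _ ↦ (1 : ℝ)) (g := f) (v := v) (by simp)
    (by simpa using integrable_fderiv_apply hf hc v)
    (by simpa using hf.continuous.integrable_of_hasCompactSupport hc)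
    (fun _ _ ↦ differentiableAt_const _) (fun x _ ↦ hf.differentiable one_ne_zero x)
  simpa using h

theorem abs_mul_sub_le_sectorial {q α m l A B c : ℝ} (hq : 0 ≤ q) (hα : 0 < α) (hqα : q < 4 / α)
    (hm : 0 < m) (hl : l = Real.sqrt (q ^ 2 / (4 * (q + 1)) + (q + 2) * q / 4 * (4 / α - q)⁻¹)) :
    |B * (q * A - m * α * q / 4 * c)| ≤ l * ((q + 1) * A ^ 2 + B ^ 2 +
      m * α * q / 4 * (m - m * α * q / 4) / (q + 2) * c ^ 2) := by
  have hd : 0 < 4 - α * q := by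
    rw [lt_div_iff₀ hα] at hqα; linarith
  have hl0 : 0 ≤ l := hl ▸ Real.sqrt_nonneg _
  have e : 4 / α - q = (4 - α * q) / α := by field_simp
  have hl2 : l ^ 2 = q ^ 2 / (4 * (q + 1)) + (q + 2) * q * α / (4 * (4 - α * q)) := by
    rw [hl, Real.sq_sqrt, e]
    · field_simp
    · rw [e]; positivity
  set Y := (q + 1) * A ^ 2 + m * α * q / 4 * (m - m * α * q / 4) / (q + 2) * c ^ 2 with hY
  have hYe : Y = (q + 1) * A ^ 2 + m ^ 2 * α * q * (4 - α * q) / (16 * (q + 2)) * c ^ 2 := by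
    rw [hY]; field_simp; ring
  have hY0 : 0 ≤ Y := by rw [hYe]; positivity
  have key : (q * A - m * α * q / 4 * c) ^ 2 ≤ 4 * l ^ 2 * Y := by
    have h : 4 * l ^ 2 * Y - (q * A - m * α * q / 4 * c) ^ 2 =
        α * q * (q + 2) / ((q + 1) * (4 - α * q)) *
          (q * m * (4 - α * q) / (4 * (q + 2)) * c + (q + 1) * A) ^ 2 := by
      rw [hl2, hYe]
      generalize 4 - α * q = d at hd
      field_simp
      ring
    have : 0 ≤ α * q * (q + 2) / ((q + 1) * (4 - α * q)) *
        (q * m * (4 - α * q) / (4 * (q + 2)) * c + (q + 1) * A) ^ 2 := by positivity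
    linarith
  have hX : |q * A - m * α * q / 4 * c| ≤ 2 * l * Real.sqrt Y := by
    refine abs_le_of_sq_le_sq ?_ (by positivity)
    rw [mul_pow, Real.sq_sqrt hY0]; linarith
  rw [abs_mul]
  have hs := Real.sq_sqrt hY0
  calc |B| * _ ≤ |B| * (2 * l * Real.sqrt Y) := by gcongr
    _ = l * (2 * |B| * √Y) := by ring
    _ ≤ l * (|B| ^ 2 + √Y ^ 2) := by gcongr; exact two_mul_le_add_sq _ _
    _ = _ := by rw [hs, sq_abs, hY]; ring

section WeightedDerivative

variable {E F : Type*} [NormedAddCommGroup E] [InnerProductSpace ℝ E]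
  [NormedAddCommGroup F] [NormedSpace ℝ F] {φ : E → F}

theorem contDiff_norm_rpow_smul_of_zero_notMem_tsupport {n : WithTop ℕ∞} (hφ : ContDiff ℝ n φ)
    (h0 : (0 : E) ∉ tsupport φ) (s : ℝ) : ContDiff ℝ n fun x ↦ ‖x‖ ^ s • φ x := by
  refine contDiff_iff_contDiffAt.mpr fun x ↦ ?_
  rcases eq_or_ne x 0 with rfl | hx
  · have h : (fun x ↦ ‖x‖ ^ s • φ x) =ᶠ[𝓝 0] fun _ ↦ 0 := by
      filter_upwards [notMem_tsupport_iff_eventuallyEq.mp h0] with x hx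
      simp [hx]
    exact contDiffAt_const.congr_of_eventuallyEq h
  · exact ((contDiffAt_norm ℝ hx).rpow_const_of_ne (norm_ne_zero_iff.mpr hx)).smul hφ.contDiffAt

theorem fderiv_norm_rpow_smul_apply (hφ : Differentiable ℝ φ) (h0 : (0 : E) ∉ tsupport φ)
    (s : ℝ) (x v : E) :
    fderiv ℝ (fun x ↦ ‖x‖ ^ s • φ x) x v =
      ‖x‖ ^ s • fderiv ℝ φ x v + (s * ‖x‖ ^ (s - 2) * inner ℝ x v) • φ x := by
  rcases eq_or_ne x 0 with rfl | hx
  · have h1 : fderiv ℝ φ 0 = 0 := by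
      by_contra h
      exact h0 (tsupport_fderiv_subset ℝ (subset_tsupport _ h))
    have h2 : fderiv ℝ (fun x ↦ ‖x‖ ^ s • φ x) 0 = 0 := by
      by_contra h
      exact h0 (tsupport_smul_subset_right _ _ (tsupport_fderiv_subset ℝ (subset_tsupport _ h)))
    simp [h1, h2]
  · have h : HasFDerivAt (fun x ↦ ‖x‖ ^ s • φ x) _ x :=
      (hasFDerivAt_norm_rpow_of_ne_zero hx s).smul (hφ x).hasFDerivAt
    rw [h.fderiv]
    simp

end WeightedDerivative

/-- The part of the density of the sesquilinear form that comes from one coordinate direction: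
`z`, `w` and `t` stand for the values of the function, of its partial derivative and of the
coordinate, `r` for the distance to the origin. -/
noncomputable def formDensity (q β r t : ℝ) (z w : ℂ) : ℂ :=
  r ^ (-β) • (w * starRingEnd ℂ (normRpowSmulDeriv q z w)) +
    (-β * r ^ (-β - 2) * t) • (w * starRingEnd ℂ (‖z‖ ^ q • z))

theorem formDensity_re (q β r t : ℝ) (z w : ℂ) :
    (formDensity q β r t z w).re =
      r ^ (-β) * (‖z‖ ^ q * (w.re ^ 2 + w.im ^ 2) + q * ‖z‖ ^ (q - 2) * inner ℝ z w ^ 2) -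
        β * r ^ (-β - 2) * t * ‖z‖ ^ q * inner ℝ z w := by
  simp only [formDensity, normRpowSmulDeriv]
  generalize r ^ (-β) = a
  generalize r ^ (-β - 2) = b
  generalize ‖z‖ ^ q = n
  generalize ‖z‖ ^ (q - 2) = k
  simp [Complex.inner]
  ring

theorem formDensity_im (q β r t : ℝ) (z w : ℂ) :
    (formDensity q β r t z w).im = (w.im * z.re - w.re * z.im) *
      (r ^ (-β) * q * ‖z‖ ^ (q - 2) * inner ℝ z w - β * r ^ (-β - 2) * t * ‖z‖ ^ q) := by
  simp only [formDensity, normRpowSmulDeriv]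
  generalize r ^ (-β) = a
  generalize r ^ (-β - 2) = b
  generalize ‖z‖ ^ q = n
  generalize ‖z‖ ^ (q - 2) = k
  simp [Complex.inner]
  ring

theorem formDensity_sectorial {q α m l r t β : ℝ} {z w : ℂ} (hq : 0 ≤ q) (hα : 0 < α)
    (hqα : q < 4 / α) (hm : 0 < m)
    (hl : l = Real.sqrt (q ^ 2 / (4 * (q + 1)) + (q + 2) * q / 4 * (4 / α - q)⁻¹))
    (hβ : β = m * α * q / 4) (hr : 0 ≤ r) (hrz : r = 0 → z = 0) {T : ℝ}
    (hT : T = (formDensity q β r t z w).re + β / (q + 2) *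
      ((q + 2) * r ^ (-β - 2) * t * ‖z‖ ^ q * inner ℝ z w +
        (m - β) * r ^ (-β - 4) * t ^ 2 * ‖z‖ ^ (q + 2))) :
    |(formDensity q β r t z w).im| ≤ l * T ∧ 0 ≤ T := by
  have hl0 : 0 ≤ l := hl ▸ Real.sqrt_nonneg _
  rcases eq_or_ne z 0 with rfl | hz
  · have hJ : formDensity q β r t 0 w = ((r ^ (-β) * 0 ^ q * Complex.normSq w : ℝ) : ℂ) := by
      simp [formDensity, normRpowSmulDeriv, ← Complex.mul_conj]
      ring
    have hT' : T = r ^ (-β) * 0 ^ q * Complex.normSq w := by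
      rw [hT, hJ]
      simp [Real.zero_rpow (by linarith : q + 2 ≠ 0)]
    have h0 : 0 ≤ T := by
      rw [hT']
      exact mul_nonneg (mul_nonneg (Real.rpow_nonneg hr _) (Real.rpow_nonneg le_rfl _))
        (Complex.normSq_nonneg _)
    rw [hJ, Complex.ofReal_im, abs_zero]
    exact ⟨mul_nonneg hl0 h0, h0⟩
  have hr' : 0 < r := hr.lt_of_ne fun h ↦ hz (hrz h.symm)
  have hn : 0 < ‖z‖ := norm_pos_iff.mpr hz
  set k := ‖z‖ ^ (q - 2) with hk
  set ρ := r ^ (-β) with hρ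
  have hk0 : 0 < k := Real.rpow_pos_of_pos hn _
  have hρ0 : 0 < ρ := Real.rpow_pos_of_pos hr' _
  have hnsq : ‖z‖ ^ 2 = z.re ^ 2 + z.im ^ 2 := by
    rw [Complex.sq_norm, Complex.normSq_apply]
    ring
  have e1 : ‖z‖ ^ q = k * ‖z‖ ^ 2 := by
    rw [hk, ← Real.rpow_natCast, ← Real.rpow_add hn]
    norm_num
  have e2 : ‖z‖ ^ (q + 2) = k * ‖z‖ ^ 4 := by
    rw [hk, ← Real.rpow_natCast, ← Real.rpow_add hn]
    congr 1
    push_cast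
    ring
  have e3 : r ^ (-β - 2) = ρ * (r⁻¹) ^ 2 := by
    rw [Real.rpow_sub hr', Real.rpow_two, inv_pow, div_eq_mul_inv]
  have e4 : r ^ (-β - 4) = ρ * (r⁻¹) ^ 4 := by
    rw [Real.rpow_sub hr', show (4 : ℝ) = (4 : ℕ) by norm_num, Real.rpow_natCast,
      inv_pow, div_eq_mul_inv]
  set A := z.re * w.re + z.im * w.im with hA
  set B := w.im * z.re - w.re * z.im with hB
  set c := ‖z‖ ^ 2 * (r⁻¹) ^ 2 * t with hc
  have hin : inner ℝ z w = A := by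
    rw [Complex.inner, hA]
    simp
    ring
  have him : (formDensity q β r t z w).im = ρ * k * (B * (q * A - β * c)) := by
    rw [formDensity_im, hin, e1, e3, ← hρ, ← hk, hc, hnsq, hA, hB]
    ring
  have hre : T = ρ * k * ((q + 1) * A ^ 2 + B ^ 2 + β * (m - β) / (q + 2) * c ^ 2) := by
    rw [hT, formDensity_re, hin, e1, e2, e3, e4, ← hρ, ← hk]
    have hn4 : ‖z‖ ^ 4 = (z.re ^ 2 + z.im ^ 2) ^ 2 := by rw [← hnsq]; ring
    rw [hc, hn4, hnsq, hA, hB]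
    field_simp
    ring
  have hmβ : 0 ≤ m - β := by
    rw [lt_div_iff₀ hα] at hqα
    have : 0 ≤ m * (4 - q * α) := mul_nonneg hm.le (by linarith)
    rw [hβ]
    linarith
  have hβ0 : 0 ≤ β := by
    rw [hβ]
    positivity
  refine ⟨?_, by rw [hre]; positivity⟩
  have := abs_mul_sub_le_sectorial (A := A) (B := B) (c := c) hq hα hqα hm hl
  rw [← hβ] at this
  rw [him, hre, abs_mul, abs_of_pos (by positivity : 0 < ρ * k), mul_left_comm l]
  gcongr

section Flux

variable {N : ℕ} {u : EuclideanSpace ℝ (Fin N) → ℂ} {q : ℝ}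

theorem contDiff_conj_norm_rpow_smul (hu : ContDiff ℝ 1 u) (hq : 0 ≤ q) :
    ContDiff ℝ 1 fun x ↦ starRingEnd ℂ (‖u x‖ ^ q • u x) :=
  Complex.conjCLE.contDiff.comp ((contDiff_norm_rpow_smul hq).comp hu)

theorem fderiv_conj_norm_rpow_smul_apply (hu : Differentiable ℝ u) (hq : 0 ≤ q)
    (x v : EuclideanSpace ℝ (Fin N)) :
    fderiv ℝ (fun x ↦ starRingEnd ℂ (‖u x‖ ^ q • u x)) x v =
      starRingEnd ℂ (normRpowSmulDeriv q (u x) (fderiv ℝ u x v)) := by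
  have h : HasFDerivAt (fun x ↦ starRingEnd ℂ (‖u x‖ ^ q • u x)) _ x :=
    Complex.conjCLE.hasFDerivAt.comp x
      ((hasFDerivAt_norm_rpow_smul hq (u x)).comp x (hu x).hasFDerivAt)
  rw [h.fderiv]
  simp

theorem support_conj_norm_rpow_smul_subset :
    Function.support (fun x ↦ starRingEnd ℂ (‖u x‖ ^ q • u x)) ⊆ Function.support u :=
  fun x hx hux ↦ hx (by simp [hux])

theorem contDiff_fderiv_apply_const (hu : ContDiff ℝ 2 u) (v : EuclideanSpace ℝ (Fin N)) :
    ContDiff ℝ 1 fun x ↦ fderiv ℝ u x v :=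
  (hu.fderiv_right (by norm_num [one_add_one_eq_two])).clm_apply contDiff_const

variable (u q) in
/-- The vector field `∇u · conj u · |u| ^ q · |x| ^ (-β)`, coordinate by coordinate. -/
noncomputable def formFlux (β : ℝ) (i : Fin N) (x : EuclideanSpace ℝ (Fin N)) : ℂ :=
  ‖x‖ ^ (-β) • (fderiv ℝ u x (EuclideanSpace.single i 1) * starRingEnd ℂ (‖u x‖ ^ q • u x))

variable (u q) in
/-- The vector field `x · |u| ^ (q + 2) · |x| ^ (-β - 2)`, coordinate by coordinate. -/
noncomputable def radialFlux (β : ℝ) (i : Fin N) (x : EuclideanSpace ℝ (Fin N)) : ℝ :=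
  ‖x‖ ^ (-β - 2) • (x i * ‖u x‖ ^ (q + 2))

variable (u q) in
/-- The integrand `-Δu · conj u · |u| ^ q · |x| ^ (-β)` of the sesquilinear form. -/
noncomputable def formIntegrand (β : ℝ) (x : EuclideanSpace ℝ (Fin N)) : ℂ :=
  ‖x‖ ^ (-β) • (-(∑ i : Fin N, fderiv ℝ (fun z ↦ fderiv ℝ u z (EuclideanSpace.single i 1)) x
    (EuclideanSpace.single i 1)) * starRingEnd ℂ (‖u x‖ ^ q • u x))

theorem zero_notMem_tsupport_mul_conj (h0 : (0 : EuclideanSpace ℝ (Fin N)) ∉ tsupport u)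
    (w : EuclideanSpace ℝ (Fin N) → ℂ) :
    (0 : EuclideanSpace ℝ (Fin N)) ∉
      tsupport fun x ↦ w x * starRingEnd ℂ (‖u x‖ ^ q • u x) :=
  fun h ↦ h0 (closure_mono support_conj_norm_rpow_smul_subset (tsupport_mul_subset_right h))

theorem hasCompactSupport_smul_mul_conj (hc : HasCompactSupport u)
    (a : EuclideanSpace ℝ (Fin N) → ℝ) (w : EuclideanSpace ℝ (Fin N) → ℂ) :
    HasCompactSupport fun x ↦ a x • (w x * starRingEnd ℂ (‖u x‖ ^ q • u x)) :=
  hc.mono fun x hx hux ↦ hx (by simp [hux])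

theorem contDiff_formFlux (hu : ContDiff ℝ 2 u)
    (h0 : (0 : EuclideanSpace ℝ (Fin N)) ∉ tsupport u) (hq : 0 ≤ q) (β : ℝ) (i : Fin N) :
    ContDiff ℝ 1 (formFlux u q β i) :=
  contDiff_norm_rpow_smul_of_zero_notMem_tsupport
    ((contDiff_fderiv_apply_const hu _).mul
      (contDiff_conj_norm_rpow_smul (hu.of_le one_le_two) hq))
    (zero_notMem_tsupport_mul_conj h0 _) _

theorem fderiv_formFlux_apply (hu : ContDiff ℝ 2 u)
    (h0 : (0 : EuclideanSpace ℝ (Fin N)) ∉ tsupport u) (hq : 0 ≤ q) (β : ℝ) (i : Fin N)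
    (x : EuclideanSpace ℝ (Fin N)) :
    fderiv ℝ (formFlux u q β i) x (EuclideanSpace.single i 1) =
      formDensity q β ‖x‖ (x i) (u x) (fderiv ℝ u x (EuclideanSpace.single i 1)) +
        ‖x‖ ^ (-β) • (fderiv ℝ (fun z ↦ fderiv ℝ u z (EuclideanSpace.single i 1)) x
          (EuclideanSpace.single i 1) * starRingEnd ℂ (‖u x‖ ^ q • u x)) := by
  have hu1 : ContDiff ℝ 1 u := hu.of_le one_le_two
  have hD := (contDiff_fderiv_apply_const hu (EuclideanSpace.single i 1)).differentiable
    one_ne_zero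
  have hg := (contDiff_conj_norm_rpow_smul hu1 hq).differentiable one_ne_zero
  have h : HasFDerivAt (fun x ↦ fderiv ℝ u x (EuclideanSpace.single i 1) *
    starRingEnd ℂ (‖u x‖ ^ q • u x)) _ x := (hD x).hasFDerivAt.mul (hg x).hasFDerivAt
  have hDg : Differentiable ℝ fun x ↦ fderiv ℝ u x (EuclideanSpace.single i 1) *
    starRingEnd ℂ (‖u x‖ ^ q • u x) := hD.mul hg
  unfold formFlux
  rw [fderiv_norm_rpow_smul_apply hDg (zero_notMem_tsupport_mul_conj h0 _), h.fderiv]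
  simp only [add_apply, smul_apply,
    fderiv_conj_norm_rpow_smul_apply (hu1.differentiable one_ne_zero) hq, smul_eq_mul,
    EuclideanSpace.inner_single_right, formDensity, smul_add]
  rw [mul_comm (starRingEnd ℂ (‖u x‖ ^ q • u x))]
  simp only [one_mul, starRingEnd_apply, star_trivial]
  ring

theorem formIntegrand_add_sum_fderiv_formFlux (hu : ContDiff ℝ 2 u)
    (h0 : (0 : EuclideanSpace ℝ (Fin N)) ∉ tsupport u) (hq : 0 ≤ q) (β : ℝ)
    (x : EuclideanSpace ℝ (Fin N)) :
    formIntegrand u q β x +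
        ∑ i, fderiv ℝ (formFlux u q β i) x (EuclideanSpace.single i 1) =
      ∑ i, formDensity q β ‖x‖ (x i) (u x) (fderiv ℝ u x (EuclideanSpace.single i 1)) := by
  simp only [fderiv_formFlux_apply hu h0 hq, Finset.sum_add_distrib, formIntegrand,
    ← Finset.smul_sum, ← Finset.sum_mul, neg_mul, smul_neg]
  ring

theorem integrable_formIntegrand (hu : ContDiff ℝ 2 u) (hc : HasCompactSupport u)
    (h0 : (0 : EuclideanSpace ℝ (Fin N)) ∉ tsupport u) (hq : 0 ≤ q) (β : ℝ) :
    Integrable (formIntegrand u q β) := by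
  refine Continuous.integrable_of_hasCompactSupport ?_ (hasCompactSupport_smul_mul_conj hc _ _)
  refine (contDiff_norm_rpow_smul_of_zero_notMem_tsupport (n := 0) (contDiff_zero.mpr
    (Continuous.mul (Continuous.neg ?_)
      (contDiff_conj_norm_rpow_smul (hu.of_le one_le_two) hq).continuous))
    (zero_notMem_tsupport_mul_conj h0 _) _).continuous
  exact continuous_finsetSum _ fun i _ ↦
    ((contDiff_fderiv_apply_const hu _).continuous_fderiv one_ne_zero).clm_apply continuous_const

theorem zero_notMem_tsupport_coord_mul (h0 : (0 : EuclideanSpace ℝ (Fin N)) ∉ tsupport u)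
    (hq : 0 ≤ q) (i : Fin N) :
    (0 : EuclideanSpace ℝ (Fin N)) ∉
      tsupport fun x : EuclideanSpace ℝ (Fin N) ↦ x i * ‖u x‖ ^ (q + 2) :=
  fun h ↦ h0 (closure_mono (Function.support_subset_iff'.mpr fun x hx ↦ by
    simp [Function.notMem_support.mp hx, Real.zero_rpow (by linarith : q + 2 ≠ 0)]) h)

theorem hasCompactSupport_radialFlux (hc : HasCompactSupport u) (hq : 0 ≤ q) (β : ℝ)
    (i : Fin N) : HasCompactSupport (radialFlux u q β i) :=
  hc.mono fun x hx hux ↦ hx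
    (by simp [radialFlux, hux, Real.zero_rpow (by linarith : q + 2 ≠ 0)])

theorem contDiff_radialFlux (hu : ContDiff ℝ 1 u)
    (h0 : (0 : EuclideanSpace ℝ (Fin N)) ∉ tsupport u) (hq : 0 ≤ q) (β : ℝ) (i : Fin N) :
    ContDiff ℝ 1 (radialFlux u q β i) :=
  contDiff_norm_rpow_smul_of_zero_notMem_tsupport
    ((EuclideanSpace.proj (𝕜 := ℝ) i).contDiff.mul (hu.norm_rpow (by linarith)))
    (zero_notMem_tsupport_coord_mul h0 hq i) _

theorem fderiv_radialFlux_apply (hu : Differentiable ℝ u)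
    (h0 : (0 : EuclideanSpace ℝ (Fin N)) ∉ tsupport u) (hq : 0 ≤ q) (β : ℝ) (i : Fin N)
    (x : EuclideanSpace ℝ (Fin N)) :
    fderiv ℝ (radialFlux u q β i) x (EuclideanSpace.single i 1) =
      (q + 2) * ‖x‖ ^ (-β - 2) * x i * ‖u x‖ ^ q *
        inner ℝ (u x) (fderiv ℝ u x (EuclideanSpace.single i 1)) +
      ‖x‖ ^ (-β - 2) * ‖u x‖ ^ (q + 2) +
      (-β - 2) * ‖x‖ ^ (-β - 4) * x i ^ 2 * ‖u x‖ ^ (q + 2) := by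
  have hq1 : 1 < q + 2 := by linarith
  have hn := hu.norm_rpow hq1
  have hx (x : EuclideanSpace ℝ (Fin N)) : HasFDerivAt (fun x : EuclideanSpace ℝ (Fin N) ↦ x i)
    (EuclideanSpace.proj (𝕜 := ℝ) i) x := (EuclideanSpace.proj (𝕜 := ℝ) i).hasFDerivAt
  have h : HasFDerivAt (fun x : EuclideanSpace ℝ (Fin N) ↦ x i * ‖u x‖ ^ (q + 2)) _ x :=
    (hx x).mul (hn x).hasFDerivAt
  have hxn : Differentiable ℝ fun x : EuclideanSpace ℝ (Fin N) ↦ x i * ‖u x‖ ^ (q + 2) :=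
    fun x ↦ (hx x).differentiableAt.mul (hn x)
  unfold radialFlux
  rw [fderiv_norm_rpow_smul_apply hxn
    (zero_notMem_tsupport_coord_mul h0 hq i), h.fderiv, hu.fderiv_norm_rpow hq1,
    show -β - 2 - 2 = -β - 4 by ring, add_sub_cancel_right]
  simp [-Complex.inner, EuclideanSpace.inner_single_right]
  ring

theorem sum_fderiv_radialFlux (hu : Differentiable ℝ u)
    (h0 : (0 : EuclideanSpace ℝ (Fin N)) ∉ tsupport u) (hq : 0 ≤ q) (β : ℝ)
    (x : EuclideanSpace ℝ (Fin N)) :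
    ∑ i, fderiv ℝ (radialFlux u q β i) x (EuclideanSpace.single i 1) =
      ∑ i, ((q + 2) * ‖x‖ ^ (-β - 2) * x i * ‖u x‖ ^ q *
        inner ℝ (u x) (fderiv ℝ u x (EuclideanSpace.single i 1)) +
        ((N : ℝ) - 2 - β) * ‖x‖ ^ (-β - 4) * x i ^ 2 * ‖u x‖ ^ (q + 2)) := by
  have hs : N * (‖x‖ ^ (-β - 2) * ‖u x‖ ^ (q + 2)) =
      ∑ i, N * ‖x‖ ^ (-β - 4) * x i ^ 2 * ‖u x‖ ^ (q + 2) := by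
    rw [← Finset.sum_mul, ← Finset.mul_sum, ← EuclideanSpace.real_norm_sq_eq]
    rcases eq_or_ne x 0 with rfl | hx
    · simp [image_eq_zero_of_notMem_tsupport h0, Real.zero_rpow (by linarith : q + 2 ≠ 0)]
    · have : ‖x‖ ^ (-β - 2) = ‖x‖ ^ (-β - 4) * ‖x‖ ^ 2 := by
        rw [← Real.rpow_natCast, ← Real.rpow_add (norm_pos_iff.mpr hx)]
        congr 1
        push_cast
        ring
      rw [this]
      ring
  simp only [fderiv_radialFlux_apply hu h0 hq, Finset.sum_add_distrib, Finset.sum_const,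
    Finset.card_univ, Fintype.card_fin, nsmul_eq_mul]
  rw [hs, add_assoc, ← Finset.sum_add_distrib]
  congr 1
  exact Finset.sum_congr rfl fun i _ ↦ by ring

theorem abs_im_integral_formIntegrand_le {α β l : ℝ} (hN : 3 ≤ N) (hα : 0 < α) (hu : ContDiff ℝ 2 u)
    (hc : HasCompactSupport u) (h0 : (0 : EuclideanSpace ℝ (Fin N)) ∉ tsupport u)
    (hq : 0 ≤ q) (hqα : q < 4 / α) (hβ : β = ((N : ℝ) - 2) * α * q / 4)
    (hl : l = Real.sqrt (q ^ 2 / (4 * (q + 1)) + (q + 2) * q / 4 * (4 / α - q)⁻¹)) :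
    |(∫ x, formIntegrand u q β x).im| ≤ l * (∫ x, formIntegrand u q β x).re ∧
      0 ≤ (∫ x, formIntegrand u q β x).re := by
  have hm : (0 : ℝ) < N - 2 := by
    have : (3 : ℝ) ≤ N := by exact_mod_cast hN
    linarith
  have hu1 : ContDiff ℝ 1 u := hu.of_le one_le_two
  have hVc (i) : HasCompactSupport (formFlux u q β i) := hasCompactSupport_smul_mul_conj hc _ _
  have hV := contDiff_formFlux hu h0 hq β
  have hW := contDiff_radialFlux hu1 h0 hq β
  have hWc := hasCompactSupport_radialFlux hc hq β
  have hsV : Integrable fun x ↦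
      ∑ i, fderiv ℝ (formFlux u q β i) x (EuclideanSpace.single i 1) :=
    integrable_finsetSum _ fun i _ ↦ integrable_fderiv_apply (hV i) (hVc i) _
  have hsW : Integrable fun x ↦
      ∑ i, fderiv ℝ (radialFlux u q β i) x (EuclideanSpace.single i 1) :=
    integrable_finsetSum _ fun i _ ↦ integrable_fderiv_apply (hW i) (hWc i) _
  have hsV0 : ∫ x, ∑ i, fderiv ℝ (formFlux u q β i) x (EuclideanSpace.single i 1) = 0 := by
    rw [integral_finsetSum _ fun i _ ↦ integrable_fderiv_apply (hV i) (hVc i) _]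
    exact Finset.sum_eq_zero fun i _ ↦ integral_fderiv_apply_eq_zero _ (hV i) (hVc i) _
  have hsW0 : ∫ x, ∑ i, fderiv ℝ (radialFlux u q β i) x (EuclideanSpace.single i 1) = 0 := by
    rw [integral_finsetSum _ fun i _ ↦ integrable_fderiv_apply (hW i) (hWc i) _]
    exact Finset.sum_eq_zero fun i _ ↦ integral_fderiv_apply_eq_zero _ (hW i) (hWc i) _
  have hf := integrable_formIntegrand hu hc h0 hq β
  obtain ⟨J, hJ⟩ : ∃ J : EuclideanSpace ℝ (Fin N) → ℂ, ∀ x, J x = ∑ i,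
      formDensity q β ‖x‖ (x i) (u x) (fderiv ℝ u x (EuclideanSpace.single i 1)) :=
    ⟨_, fun _ ↦ rfl⟩
  have hJ' : J = fun x ↦ formIntegrand u q β x +
      ∑ i, fderiv ℝ (formFlux u q β i) x (EuclideanSpace.single i 1) :=
    funext fun x ↦ (hJ x).trans (formIntegrand_add_sum_fderiv_formFlux hu h0 hq β x).symm
  have hJi : Integrable J := hJ' ▸ hf.add hsV
  have hIJ : ∫ x, formIntegrand u q β x = ∫ x, J x := by
    rw [hJ', integral_add hf hsV, hsV0, add_zero]
  obtain ⟨T, hT⟩ : ∃ T : EuclideanSpace ℝ (Fin N) → ℝ, T = fun x ↦ (J x).re + β / (q + 2) *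
      ∑ i, fderiv ℝ (radialFlux u q β i) x (EuclideanSpace.single i 1) := ⟨_, rfl⟩
  have hTi : Integrable T := hT ▸ hJi.re.add (hsW.const_mul _)
  have hIre : (∫ x, J x).re = ∫ x, T x := by
    have h : ∫ x, T x = ∫ x, (J x).re := by
      simp only [hT]
      refine (integral_add hJi.re (hsW.const_mul _)).trans ?_
      rw [integral_const_mul, hsW0, mul_zero, add_zero]
      rfl
    rw [h]
    exact (integral_re hJi).symm
  have hIim : (∫ x, J x).im = ∫ x, (J x).im := (integral_im hJi).symm
  have key (x) : |(J x).im| ≤ l * T x ∧ 0 ≤ T x := by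
    have h (i : Fin N) := formDensity_sectorial (t := x i) (z := u x)
      (w := fderiv ℝ u x (EuclideanSpace.single i 1)) hq hα hqα hm hl hβ (norm_nonneg x)
      (fun hx ↦ norm_eq_zero.mp hx ▸ image_eq_zero_of_notMem_tsupport h0) rfl
    simp only [hT]
    rw [sum_fderiv_radialFlux (hu1.differentiable one_ne_zero) h0 hq, hJ, Complex.im_sum,
      Complex.re_sum, Finset.mul_sum _ _ (β / (q + 2)), ← Finset.sum_add_distrib, Finset.mul_sum]
    exact ⟨(Finset.abs_sum_le_sum_abs _ _).trans (Finset.sum_le_sum fun i _ ↦ (h i).1),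
      Finset.sum_nonneg fun i _ ↦ (h i).2⟩
  rw [hIJ, hIre, hIim, ← integral_const_mul]
  exact ⟨abs_integral_le_integral_abs.trans
    (integral_mono hJi.im.abs (hTi.const_mul _) fun x ↦ (key x).1),
    integral_nonneg fun x ↦ (key x).2⟩

end Flux

/-- sectoriality estimate. For `N ≥ 3`, `0 ∉ closure Ω`, `2 ≤ p < 2 + 4/α`,
`β = (N−2)α(p−2)/4`, `ℓ = √((p−2)²/(4(p−1)) + (p(p−2)/4)(2+4/α−p)⁻¹)`, and every smooth
compactly supported `u : Ω → ℂ`, the integral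
`I(u) = ∫_Ω (−Δu) conj(u) |u|^{p−2} |x|^{−β} dx` satisfies `|Im I| ≤ ℓ Re I`; in
particular `Re I ≥ 0`. -/
theorem stmt_8 (N : ℕ) (hN : 3 ≤ N) (α : ℝ) (hα : 0 < α)
    (Ω : Set (EuclideanSpace ℝ (Fin N))) (hΩ : IsOpen Ω)
    (h0 : (0 : EuclideanSpace ℝ (Fin N)) ∉ closure Ω)
    (p : ℝ) (hp2 : 2 ≤ p) (hp4 : p < 2 + 4 / α)
    (β ℓ : ℝ) (hβ : β = ((N : ℝ) - 2) * α * (p - 2) / 4)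
    (hℓ : ℓ = Real.sqrt ((p - 2) ^ 2 / (4 * (p - 1)) + p * (p - 2) / 4 * (2 + 4 / α - p)⁻¹))
    (u : EuclideanSpace ℝ (Fin N) → ℂ)
    (hu : ContDiff ℝ (⊤ : ℕ∞) u) (husupp : HasCompactSupport u) (husub : tsupport u ⊆ Ω)
    (I : ℂ)
    (hI : I = ∫ x in Ω,
        (-(∑ i : Fin N,
            fderiv ℝ (fun z => fderiv ℝ u z (EuclideanSpace.single i 1)) x
              (EuclideanSpace.single i 1)))
          * (starRingEnd ℂ) (u x)
          * ((‖u x‖ ^ (p - 2) * ‖x‖ ^ (-β) : ℝ) : ℂ)) :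
    |I.im| ≤ ℓ * I.re ∧ 0 ≤ I.re := by
  obtain ⟨q, rfl⟩ : ∃ q, p = q + 2 := ⟨p - 2, by ring⟩
  simp only [add_sub_cancel_right] at hβ hℓ hI
  rw [show q + 2 - 1 = q + 1 by ring, show 2 + 4 / α - (q + 2) = 4 / α - q by ring] at hℓ
  have hI' : I = ∫ x, formIntegrand u q β x := by
    rw [hI, ← setIntegral_eq_integral_of_forall_compl_eq_zero (s := Ω)
      (f := formIntegrand u q β)]
    · refine setIntegral_congr_fun hΩ.measurableSet fun x _ ↦ ?_
      simp only [formIntegrand, Complex.real_smul, map_mul, Complex.conj_ofReal,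
        Complex.ofReal_mul]
      ring
    · intro x hx
      simp [formIntegrand, image_eq_zero_of_notMem_tsupport fun h ↦ hx (husub h)]
  rw [hI']
  exact abs_im_integral_formIntegrand_le hN hα (hu.of_le (by norm_cast)) husupp
    (fun h ↦ h0 (subset_closure (husub h))) (by linarith) (by linarith) hβ hℓ
end

section
/- Let N ≥ 2, let Ω ⊆ ℝ^N be open with 0 ∉ closure(Ω), let p ≥ 2 and β ∈ ℝ. Then for every smooth compactly supported function u : Ω → ℂ, Re ∫_Ω (−Δu) conj(u) |u|^{p−2} |x|^{−β} dx = (p−1) ∫_Ω | Re( conj(u) ∇u ) |² |u|^{p−4} |x|^{−β} dx + ∫_Ω | Im( conj(u) ∇u ) |² |u|^{p−4} |x|^{−β} dx + (β(N−2−β)/p) ∫_Ω |u|^p |x|^{−β−2} dx, where the integrands | Re( conj(u) ∇u ) |² |u|^{p−4} and | Im( conj(u) ∇u ) |² |u|^{p−4} are interpreted as 0 at points where u vanishes. -/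
open MeasureTheory
open Filter Topology Asymptotics
open scoped ComplexConjugate

/-- The partial derivative of `u` in the direction of the `i`-th coordinate vector. -/
noncomputable def partialDeriv {N : ℕ} (i : Fin N) (u : EuclideanSpace ℝ (Fin N) → ℂ)
    (x : EuclideanSpace ℝ (Fin N)) : ℂ :=
  fderiv ℝ u x (EuclideanSpace.single i 1)

theorem hasDerivAt_norm_rpow_comp_of_ne {E : Type*} [NormedAddCommGroup E] [InnerProductSpace ℝ E]
    {f : ℝ → E} {f' : E} {t : ℝ} (hf : HasDerivAt f f' t) (h : f t ≠ 0) (s : ℝ) :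
    HasDerivAt (fun τ => ‖f τ‖ ^ s) (s * ‖f t‖ ^ (s - 2) * inner ℝ (f t) f') t := by
  have hpos : 0 < ‖f t‖ := norm_pos_iff.mpr h
  have key := hf.norm_sq.rpow_const (p := s / 2) (Or.inl (by positivity))
  convert key using 1
  · ext τ
    rw [← Real.rpow_natCast, ← Real.rpow_mul (norm_nonneg _)]
    congr 1
    push_cast
    ring
  · rw [← Real.rpow_natCast, ← Real.rpow_mul hpos.le]
    have : ((2 : ℕ) : ℝ) * (s / 2 - 1) = s - 2 := by push_cast; ring
    rw [this]
    ring

theorem hasDerivAt_norm_rpow_comp {E : Type*} [NormedAddCommGroup E] [InnerProductSpace ℝ E]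
    {f : ℝ → E} {f' : E} {t : ℝ} (hf : HasDerivAt f f' t) {s : ℝ} (hs : 1 < s) :
    HasDerivAt (fun τ => ‖f τ‖ ^ s) (s * ‖f t‖ ^ (s - 2) * inner ℝ (f t) f') t := by
  exact ((hasFDerivAt_norm_rpow (f t) hs).comp_hasDerivAt t hf).congr_deriv (by simp)

theorem HasDerivAt.mul_of_eq_zero {a b : ℝ → ℝ} {b' t : ℝ} (hb : HasDerivAt b b' t)
    (ha : ContinuousAt a t) (ha0 : a t = 0) (hb0 : b t = 0) :
    HasDerivAt (fun τ => b τ * a τ) 0 t := by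
  rw [hasDerivAt_iff_isLittleO]
  have h1 : b =O[𝓝 t] fun τ => τ - t := by simpa [hb0] using hb.isBigO_sub
  have h2 : a =o[𝓝 t] fun _ => (1 : ℝ) := by
    rw [isLittleO_one_iff]
    simpa [ContinuousAt, ha0] using ha
  simpa [hb0] using h1.mul_isLittleO h2

theorem hasDerivAt_re_conj_mul_mul_norm_rpow {c d : ℝ → ℂ} {d' : ℂ} {t p : ℝ} (hp : 2 < p)
    (hc : HasDerivAt c (d t) t) (hd : HasDerivAt d d' t) :
    HasDerivAt (fun τ => (conj (c τ) * d τ).re * ‖c τ‖ ^ (p - 2))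
      (((conj (c t) * d').re + (p - 1) * ((conj (c t) * d t).re ^ 2 * (‖c t‖ ^ 2)⁻¹)
        + (conj (c t) * d t).im ^ 2 * (‖c t‖ ^ 2)⁻¹) * ‖c t‖ ^ (p - 2)) t := by
  have hprod : HasDerivAt (fun τ => (conj (c τ) * d τ).re)
      ((conj (d t) * d t + conj (c t) * d').re) t := by
    have := (Complex.conjCLE.toContinuousLinearMap.hasFDerivAt.comp_hasDerivAt t hc).mul hd
    exact Complex.reCLM.hasFDerivAt.comp_hasDerivAt t this
  by_cases h : c t = 0
  · have h0 : ‖c t‖ ^ (p - 2) = 0 := by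
      rw [h, norm_zero, Real.zero_rpow (by linarith)]
    rw [h0, mul_zero]
    refine hprod.mul_of_eq_zero ?_ h0 (by simp [h])
    exact hc.continuousAt.norm.rpow_const (Or.inr (by linarith))
  · have hpos : 0 < ‖c t‖ := norm_pos_iff.mpr h
    refine (hprod.mul (hasDerivAt_norm_rpow_comp_of_ne hc h (p - 2))).congr_deriv ?_
    have hnorm : ‖c t‖ ^ (p - 2 - 2) = ‖c t‖ ^ (p - 2) * (‖c t‖ ^ 2)⁻¹ := by
      rw [show p - 2 - 2 = p - 2 - ((2 : ℕ) : ℝ) by push_cast; ring,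
        Real.rpow_sub_natCast hpos.ne', div_eq_mul_inv]
    rw [hnorm, Complex.inner, mul_comm (d t)]
    have hsq : (conj (d t) * d t).re
        = ((conj (c t) * d t).re ^ 2 + (conj (c t) * d t).im ^ 2) * (‖c t‖ ^ 2)⁻¹ := by
      have hne : ‖c t‖ ^ 2 ≠ 0 := by positivity
      rw [eq_mul_inv_iff_mul_eq₀ hne, Complex.sq_norm, Complex.normSq_apply]
      simp only [Complex.mul_re, Complex.mul_im, Complex.conj_re, Complex.conj_im]
      ring
    rw [Complex.add_re, hsq]
    ring

theorem integrable_of_continuousOn_support {E F : Type*} [TopologicalSpace E] [T2Space E]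
    [MeasurableSpace E] [OpensMeasurableSpace E] [NormedAddCommGroup F] {μ : Measure E}
    [SecondCountableTopologyEither E F] [TopologicalSpace.PseudoMetrizableSpace E]
    [IsFiniteMeasureOnCompacts μ] {f : E → F} {K : Set E} (hK : IsCompact K)
    (hf : ContinuousOn f K) (hs : ∀ x ∉ K, f x = 0) : Integrable f μ :=
  (integrableOn_iff_integrable_of_support_subset
    (Function.support_subset_iff'.mpr hs)).mp (hf.integrableOn_compact hK)

theorem integral_eq_zero_of_hasLineDerivAt {E : Type*} [NormedAddCommGroup E] [NormedSpace ℝ E]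
    [MeasurableSpace E] [BorelSpace E] [FiniteDimensional ℝ E] {μ : Measure E}
    [μ.IsAddHaarMeasure] {g g' : E → ℝ} {v : E} (hg : Integrable g μ) (hg' : Integrable g' μ)
    (h : ∀ x, HasLineDerivAt ℝ g (g' x) x v) : ∫ x, g' x ∂μ = 0 := by
  have := integral_bilinear_hasLineDerivAt_right_eq_neg_left_of_integrable (μ := μ)
    (f := fun _ => (1 : ℝ)) (f' := fun _ => 0) (g := g) (g' := g') (v := v)
    (B := ContinuousLinearMap.mul ℝ ℝ) (by simp) (by simpa using hg') (by simpa using hg)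
    (fun x _ => by simpa [HasLineDerivAt] using hasDerivAt_const (0 : ℝ) (1 : ℝ))
    (fun x _ => h x)
  simpa using this

theorem tendsto_integral_mul_norm_rpow {E : Type*} [MeasurableSpace E] {μ : Measure E}
    {A : E → ℝ} {u : E → ℂ} {C : ℝ} (hA : Integrable A μ) (hu : AEStronglyMeasurable u μ)
    (hC : ∀ x, ‖u x‖ ≤ C) (h0 : ∀ x, u x = 0 → A x = 0) :
    Tendsto (fun p : ℝ => ∫ x, A x * ‖u x‖ ^ (p - 2) ∂μ) (𝓝[>] 2)
      (𝓝 (∫ x, A x * ‖u x‖ ^ ((2 : ℝ) - 2) ∂μ)) := by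
  refine tendsto_integral_filter_of_dominated_convergence (fun x => ‖A x‖ * (1 + C)) ?_ ?_ ?_ ?_
  · exact Eventually.of_forall fun p =>
      hA.aestronglyMeasurable.mul (hu.norm.aemeasurable.pow_const _).aestronglyMeasurable
  · filter_upwards [Ioo_mem_nhdsGT (show (2 : ℝ) < 3 by norm_num)] with p hp
    refine Eventually.of_forall fun x => ?_
    rw [norm_mul]
    gcongr
    rw [Real.norm_of_nonneg (by positivity)]
    rcases le_total ‖u x‖ 1 with h | h
    · have := Real.rpow_le_one (norm_nonneg (u x)) h (show 0 ≤ p - 2 by linarith [hp.1])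
      linarith [(norm_nonneg _).trans (hC x)]
    · have := Real.rpow_le_rpow_of_exponent_le h (show p - 2 ≤ 1 by linarith [hp.2])
      rw [Real.rpow_one] at this
      linarith [hC x]
  · exact hA.norm.mul_const _
  · refine Eventually.of_forall fun x => ?_
    by_cases hx : u x = 0
    · simp [h0 x hx]
    · refine Tendsto.const_mul _ (Tendsto.mono_left ?_ nhdsWithin_le_nhds)
      have : Continuous fun p : ℝ => ‖u x‖ ^ (p - 2) :=
        Continuous.rpow continuous_const (by fun_prop) fun p => Or.inl (by simpa using hx)
      exact this.tendsto 2

section Flux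

variable {N : ℕ}

theorem ContDiff.partialDeriv {u : EuclideanSpace ℝ (Fin N) → ℂ}
    (hu : ContDiff ℝ (⊤ : ℕ∞) u) (i : Fin N) : ContDiff ℝ (⊤ : ℕ∞) (partialDeriv i u) :=
  (hu.fderiv_right (m := (⊤ : ℕ∞)) (by simp)).clm_apply contDiff_const

theorem partialDeriv_eq_zero_of_notMem_tsupport {u : EuclideanSpace ℝ (Fin N) → ℂ}
    {x : EuclideanSpace ℝ (Fin N)} (hx : x ∉ tsupport u) (i : Fin N) :
    partialDeriv i u x = 0 := by
  have := (notMem_tsupport_iff_eventuallyEq.mp hx).fderiv_eq (𝕜 := ℝ)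
  simp [partialDeriv, this]

theorem hasDerivAt_partialDeriv_line {u : EuclideanSpace ℝ (Fin N) → ℂ}
    (hu : ContDiff ℝ (⊤ : ℕ∞) u) (i : Fin N) (x : EuclideanSpace ℝ (Fin N)) :
    HasDerivAt (fun t : ℝ => u (x + t • EuclideanSpace.single i 1)) (partialDeriv i u x) 0 :=
  ((hu.differentiable (by simp)) x).hasFDerivAt.hasLineDerivAt _

/-- The `i`-th component of the vector field whose divergence gives the weighted identity. -/
noncomputable def weightedFlux (p β : ℝ) (u : EuclideanSpace ℝ (Fin N) → ℂ) (i : Fin N)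
    (x : EuclideanSpace ℝ (Fin N)) : ℝ :=
  (conj (u x) * partialDeriv i u x).re * ‖u x‖ ^ (p - 2) * ‖x‖ ^ (-β)
    + β / p * (‖u x‖ ^ p * (x i * ‖x‖ ^ (-β - 2)))

/-- The derivative of `weightedFlux p β u i` in the `i`-th coordinate direction. -/
noncomputable def weightedFluxDeriv (p β : ℝ) (u : EuclideanSpace ℝ (Fin N) → ℂ) (i : Fin N)
    (x : EuclideanSpace ℝ (Fin N)) : ℝ :=
  (conj (u x) * partialDeriv i (partialDeriv i u) x).re * ‖x‖ ^ (-β) * ‖u x‖ ^ (p - 2)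
    + (p - 1) * ((conj (u x) * partialDeriv i u x).re ^ 2 * (‖u x‖ ^ 2)⁻¹ * ‖x‖ ^ (-β)
        * ‖u x‖ ^ (p - 2))
    + (conj (u x) * partialDeriv i u x).im ^ 2 * (‖u x‖ ^ 2)⁻¹ * ‖x‖ ^ (-β) * ‖u x‖ ^ (p - 2)
    + β / p * (‖u x‖ ^ 2 * (‖x‖ ^ (-β - 2) - (β + 2) * (x i ^ 2 * ‖x‖ ^ (-β - 2 - 2)))
        * ‖u x‖ ^ (p - 2))

theorem norm_rpow_eq_sq_mul {z : ℂ} {p : ℝ} (hp : 2 ≤ p) :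
    ‖z‖ ^ p = ‖z‖ ^ 2 * ‖z‖ ^ (p - 2) := by
  rw [← Real.rpow_natCast, ← Real.rpow_add_of_nonneg (norm_nonneg z) (by simp) (by linarith)]
  congr 1
  push_cast
  ring

theorem hasLineDerivAt_weightedFlux {p β : ℝ} (hp : 2 < p) {u : EuclideanSpace ℝ (Fin N) → ℂ}
    (hu : ContDiff ℝ (⊤ : ℕ∞) u) (h0 : (0 : EuclideanSpace ℝ (Fin N)) ∉ tsupport u) (i : Fin N)
    (x : EuclideanSpace ℝ (Fin N)) :
    HasLineDerivAt ℝ (weightedFlux p β u i) (weightedFluxDeriv p β u i x) x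
      (EuclideanSpace.single i 1) := by
  by_cases hx : x ∈ tsupport u
  · have hx0 : x ≠ 0 := fun h => h0 (h ▸ hx)
    have hc := hasDerivAt_partialDeriv_line hu i x
    have hd := hasDerivAt_partialDeriv_line (hu.partialDeriv i) i x
    have hy : HasDerivAt (fun t : ℝ => x + t • EuclideanSpace.single i (1 : ℝ))
        (EuclideanSpace.single i 1) 0 := by
      simpa using ((hasDerivAt_id (0 : ℝ)).smul_const (EuclideanSpace.single i (1 : ℝ))).const_add x
    have hxi : HasDerivAt (fun t : ℝ => (x + t • EuclideanSpace.single i (1 : ℝ)) i) 1 0 := by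
      simpa using (hasDerivAt_id (0 : ℝ)).const_add (x i)
    have hw (s : ℝ) := hasDerivAt_norm_rpow_comp_of_ne hy (by simpa using hx0) s
    have hA := hasDerivAt_re_conj_mul_mul_norm_rpow (t := 0) hp (by simpa using hc) hd
    have hP := hasDerivAt_norm_rpow_comp hc (show 1 < p by linarith)
    refine ((hA.mul (hw (-β))).add
      ((hP.mul (hxi.mul (hw (-β - 2)))).const_mul (β / p))).congr_deriv ?_
    simp only [Pi.mul_apply, zero_smul, add_zero, Complex.inner, EuclideanSpace.inner_single_right,
      weightedFluxDeriv, norm_rpow_eq_sq_mul (z := u x) hp.le, one_mul,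
      conj_trivial, mul_comm (partialDeriv i u x) (conj (u x))]
    have hp0 : p ≠ 0 := by linarith
    field_simp
    ring
  · have hev : weightedFlux p β u i =ᶠ[𝓝 x] fun _ => 0 := by
      filter_upwards [notMem_tsupport_iff_eventuallyEq.mp hx] with y hy
      have hp0 : p ≠ 0 := by linarith
      simp [weightedFlux, hy, Real.zero_rpow hp0]
    have hx' : weightedFluxDeriv p β u i x = 0 := by
      simp [weightedFluxDeriv, image_eq_zero_of_notMem_tsupport hx]
    rw [hx']
    exact (hasFDerivAt_const (0 : ℝ) x).congr_of_eventuallyEq hev |>.hasLineDerivAt _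

end Flux

section Integrals

variable {N : ℕ} {u : EuclideanSpace ℝ (Fin N) → ℂ}

theorem continuousOn_norm_rpow_of_zero_notMem {K : Set (EuclideanSpace ℝ (Fin N))}
    (h0 : (0 : EuclideanSpace ℝ (Fin N)) ∉ K) (s : ℝ) :
    ContinuousOn (fun x : EuclideanSpace ℝ (Fin N) => ‖x‖ ^ s) K :=
  continuous_norm.continuousOn.rpow_const fun _ hx =>
    Or.inl (norm_ne_zero_iff.mpr fun h => h0 (h ▸ hx))

theorem integrable_mul_norm_rpow (husupp : HasCompactSupport u)
    (h0 : (0 : EuclideanSpace ℝ (Fin N)) ∉ tsupport u) {f : EuclideanSpace ℝ (Fin N) → ℝ}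
    (hf : Continuous f) (hfu : ∀ x ∉ tsupport u, f x = 0) (s : ℝ) :
    Integrable (fun x => f x * ‖x‖ ^ s) :=
  integrable_of_continuousOn_support husupp
    (hf.continuousOn.mul (continuousOn_norm_rpow_of_zero_notMem h0 s))
    fun x hx => by simp [hfu x hx]

theorem integrable_re_conj_mul_laplacian (hu : ContDiff ℝ (⊤ : ℕ∞) u)
    (husupp : HasCompactSupport u) (h0 : (0 : EuclideanSpace ℝ (Fin N)) ∉ tsupport u) (β : ℝ)
    (i : Fin N) :
    Integrable (fun x =>
      (conj (u x) * partialDeriv i (partialDeriv i u) x).re * ‖x‖ ^ (-β)) := by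
  have h1 := hu.continuous
  have h2 := ((hu.partialDeriv i).partialDeriv i).continuous
  exact integrable_mul_norm_rpow husupp h0 (by fun_prop)
    (fun x hx => by simp [image_eq_zero_of_notMem_tsupport hx]) _

theorem integrable_sq_part_mul_inv_norm_sq (hu : ContDiff ℝ (⊤ : ℕ∞) u)
    (husupp : HasCompactSupport u) (h0 : (0 : EuclideanSpace ℝ (Fin N)) ∉ tsupport u) (β : ℝ)
    (i : Fin N) {L : ℂ → ℝ} (hL : Continuous L) (hLn : ∀ z, |L z| ≤ ‖z‖) :
    Integrable (fun x =>
      L (conj (u x) * partialDeriv i u x) ^ 2 * (‖u x‖ ^ 2)⁻¹ * ‖x‖ ^ (-β)) := by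
  have h1 := hu.continuous
  have h2 := (hu.partialDeriv i).continuous
  have hdom := integrable_mul_norm_rpow husupp h0 (f := fun x => ‖partialDeriv i u x‖ ^ 2)
    (by fun_prop) (fun _ hx => by simp [partialDeriv_eq_zero_of_notMem_tsupport hx]) (-β)
  refine hdom.mono' ?_ (Eventually.of_forall fun x => ?_)
  · have hm : Measurable fun x => L (conj (u x) * partialDeriv i u x) :=
      (hL.comp (by fun_prop : Continuous fun x => conj (u x) * partialDeriv i u x)).measurable
    have := h1.measurable
    exact (((hm.pow_const 2).mul (this.norm.pow_const 2).inv).mul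
      (measurable_norm.pow_const (-β))).aestronglyMeasurable
  · rw [Real.norm_of_nonneg (by positivity)]
    gcongr
    have hle : L (conj (u x) * partialDeriv i u x) ^ 2
        ≤ ‖u x‖ ^ 2 * ‖partialDeriv i u x‖ ^ 2 := by
      rw [← mul_pow, ← sq_abs]
      gcongr
      simpa using hLn (conj (u x) * partialDeriv i u x)
    exact mul_inv_le_of_le_mul₀ (by positivity) (by positivity) (by linarith)

theorem integrable_norm_sq_mul (hu : ContDiff ℝ (⊤ : ℕ∞) u)
    (husupp : HasCompactSupport u) (h0 : (0 : EuclideanSpace ℝ (Fin N)) ∉ tsupport u) (s : ℝ) :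
    Integrable (fun x => ‖u x‖ ^ 2 * ‖x‖ ^ s) := by
  have h1 := hu.continuous
  exact integrable_mul_norm_rpow husupp h0 (by fun_prop)
    (fun x hx => by simp [image_eq_zero_of_notMem_tsupport hx]) _

theorem MeasureTheory.Integrable.mul_norm_rpow_of_compactSupport {A : EuclideanSpace ℝ (Fin N) → ℝ}
    (hA : Integrable A) (hu : Continuous u) (husupp : HasCompactSupport u) {s : ℝ} (hs : 0 ≤ s) :
    Integrable (fun x => A x * ‖u x‖ ^ s) := by
  obtain ⟨C, hC⟩ := husupp.exists_bound_of_continuous hu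
  refine hA.mul_bdd (c := C ^ s) (hu.norm.rpow_const fun _ => Or.inr hs).aestronglyMeasurable
    (Eventually.of_forall fun x => ?_)
  rw [Real.norm_of_nonneg (by positivity)]
  exact Real.rpow_le_rpow (norm_nonneg _) (hC x) hs

theorem integrable_weightedFlux {p : ℝ} (hp : 2 < p) (hu : ContDiff ℝ (⊤ : ℕ∞) u)
    (husupp : HasCompactSupport u) (h0 : (0 : EuclideanSpace ℝ (Fin N)) ∉ tsupport u) (β : ℝ)
    (i : Fin N) : Integrable (weightedFlux p β u i) := by
  have h1 := hu.continuous
  have h2 := (hu.partialDeriv i).continuous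
  have h3 (s : ℝ) (hs : 0 ≤ s) : Continuous fun x => ‖u x‖ ^ s :=
    h1.norm.rpow_const fun _ => Or.inr hs
  have h4 := h3 (p - 2) (by linarith)
  have h5 := h3 p (by linarith)
  have hp0 : p ≠ 0 := by linarith
  refine (integrable_mul_norm_rpow husupp h0 (by fun_prop) (fun x hx => ?_) _).add
    (((integrable_mul_norm_rpow husupp h0
      (f := fun x => ‖u x‖ ^ p * x i) (by fun_prop) (fun x hx => ?_) (-β - 2)).congr
        (Eventually.of_forall fun x => by ring)).const_mul _)
  · simp [image_eq_zero_of_notMem_tsupport hx]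
  · simp [image_eq_zero_of_notMem_tsupport hx, Real.zero_rpow hp0]

theorem integrable_sq_coord (hu : ContDiff ℝ (⊤ : ℕ∞) u)
    (husupp : HasCompactSupport u) (h0 : (0 : EuclideanSpace ℝ (Fin N)) ∉ tsupport u) (β : ℝ)
    (i : Fin N) : Integrable (fun x =>
      ‖u x‖ ^ 2 * (‖x‖ ^ (-β - 2) - (β + 2) * (x i ^ 2 * ‖x‖ ^ (-β - 2 - 2)))) := by
  have h1 := hu.continuous
  refine ((integrable_norm_sq_mul hu husupp h0 (-β - 2)).sub
    ((integrable_mul_norm_rpow husupp h0 (f := fun x => ‖u x‖ ^ 2 * x i ^ 2) (by fun_prop)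
      (fun x hx => ?_) (-β - 2 - 2)).const_mul (β + 2))).congr
    (Eventually.of_forall fun x => ?_)
  · simp [image_eq_zero_of_notMem_tsupport hx]
  · simp only [Pi.sub_apply]
    ring

theorem integral_weightedFluxDeriv {p : ℝ} (hp : 2 < p) (hu : ContDiff ℝ (⊤ : ℕ∞) u)
    (husupp : HasCompactSupport u) (h0 : (0 : EuclideanSpace ℝ (Fin N)) ∉ tsupport u) (β : ℝ)
    (i : Fin N) :
    Integrable (weightedFluxDeriv p β u i) ∧ ∫ x, weightedFluxDeriv p β u i x = 0 := by
  have hs : 0 ≤ p - 2 := by linarith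
  have hint : Integrable (weightedFluxDeriv p β u i) :=
    ((((integrable_re_conj_mul_laplacian hu husupp h0 β i).mul_norm_rpow_of_compactSupport
      hu.continuous husupp hs).add
      (((integrable_sq_part_mul_inv_norm_sq hu husupp h0 β i Complex.continuous_re
        Complex.abs_re_le_norm).mul_norm_rpow_of_compactSupport
        hu.continuous husupp hs).const_mul _)).add
      ((integrable_sq_part_mul_inv_norm_sq hu husupp h0 β i Complex.continuous_im
        Complex.abs_im_le_norm).mul_norm_rpow_of_compactSupport hu.continuous husupp hs)).add
      (((integrable_sq_coord hu husupp h0 β i).mul_norm_rpow_of_compactSupport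
        hu.continuous husupp hs).const_mul _)
  exact ⟨hint, integral_eq_zero_of_hasLineDerivAt
    (integrable_weightedFlux hp hu husupp h0 β i) hint
    (hasLineDerivAt_weightedFlux hp hu h0 i)⟩

theorem sum_weightedFluxDeriv (p β : ℝ) (h0 : (0 : EuclideanSpace ℝ (Fin N)) ∉ tsupport u)
    (x : EuclideanSpace ℝ (Fin N)) :
    ∑ i, weightedFluxDeriv p β u i x
      = (∑ i, (conj (u x) * partialDeriv i (partialDeriv i u) x).re * ‖x‖ ^ (-β))
          * ‖u x‖ ^ (p - 2)
        + (p - 1) * ((∑ i, (conj (u x) * partialDeriv i u x).re ^ 2 * (‖u x‖ ^ 2)⁻¹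
            * ‖x‖ ^ (-β)) * ‖u x‖ ^ (p - 2))
        + (∑ i, (conj (u x) * partialDeriv i u x).im ^ 2 * (‖u x‖ ^ 2)⁻¹
            * ‖x‖ ^ (-β)) * ‖u x‖ ^ (p - 2)
        + β * (N - 2 - β) / p * (‖u x‖ ^ 2 * ‖x‖ ^ (-β - 2) * ‖u x‖ ^ (p - 2)) := by
  have hlast : ∑ i, ‖u x‖ ^ 2 * (‖x‖ ^ (-β - 2) - (β + 2) * (x i ^ 2 * ‖x‖ ^ (-β - 2 - 2)))
      = (N - 2 - β) * (‖u x‖ ^ 2 * ‖x‖ ^ (-β - 2)) := by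
    by_cases hx : x = 0
    · simp [hx, image_eq_zero_of_notMem_tsupport h0]
    · have hpos : 0 < ‖x‖ := norm_pos_iff.mpr hx
      have hV : ‖x‖ ^ 2 * ‖x‖ ^ (-β - 2 - 2) = ‖x‖ ^ (-β - 2) := by
        rw [← Real.rpow_natCast, ← Real.rpow_add hpos]
        congr 1
        push_cast
        ring
      rw [← Finset.mul_sum, Finset.sum_sub_distrib, ← Finset.mul_sum, ← Finset.sum_mul,
        ← EuclideanSpace.real_norm_sq_eq, hV]
      simp
      ring
  simp only [weightedFluxDeriv, Finset.sum_add_distrib, ← Finset.mul_sum]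
  simp only [← Finset.sum_mul, ← Finset.mul_sum] at hlast ⊢
  rw [hlast]
  ring

theorem weighted_identity_of_two_lt {p : ℝ} (hp : 2 < p) (hu : ContDiff ℝ (⊤ : ℕ∞) u)
    (husupp : HasCompactSupport u) (h0 : (0 : EuclideanSpace ℝ (Fin N)) ∉ tsupport u) (β : ℝ) :
    (∫ x, (∑ i, (conj (u x) * partialDeriv i (partialDeriv i u) x).re * ‖x‖ ^ (-β))
          * ‖u x‖ ^ (p - 2))
        + (p - 1) * (∫ x, (∑ i, (conj (u x) * partialDeriv i u x).re ^ 2 * (‖u x‖ ^ 2)⁻¹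
            * ‖x‖ ^ (-β)) * ‖u x‖ ^ (p - 2))
        + (∫ x, (∑ i, (conj (u x) * partialDeriv i u x).im ^ 2 * (‖u x‖ ^ 2)⁻¹
            * ‖x‖ ^ (-β)) * ‖u x‖ ^ (p - 2))
        + β * (N - 2 - β) / p * (∫ x, ‖u x‖ ^ 2 * ‖x‖ ^ (-β - 2) * ‖u x‖ ^ (p - 2)) = 0 := by
  have hs : 0 ≤ p - 2 := by linarith
  have h1 := (integrable_finsetSum Finset.univ fun i _ =>
    integrable_re_conj_mul_laplacian hu husupp h0 β i).mul_norm_rpow_of_compactSupport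
    hu.continuous husupp hs
  have h2 := ((integrable_finsetSum Finset.univ fun i _ =>
    integrable_sq_part_mul_inv_norm_sq hu husupp h0 β i Complex.continuous_re
        Complex.abs_re_le_norm).mul_norm_rpow_of_compactSupport
    hu.continuous husupp hs).const_mul (p - 1)
  have h3 := (integrable_finsetSum Finset.univ fun i _ =>
    integrable_sq_part_mul_inv_norm_sq hu husupp h0 β i Complex.continuous_im
        Complex.abs_im_le_norm).mul_norm_rpow_of_compactSupport
    hu.continuous husupp hs
  have h4 := ((integrable_norm_sq_mul hu husupp h0 (-β - 2)).mul_norm_rpow_of_compactSupport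
    hu.continuous husupp hs).const_mul (β * (N - 2 - β) / p)
  rw [← integral_const_mul, ← integral_const_mul, ← integral_add' h1 h2,
    ← integral_add' (h1.add h2) h3, ← integral_add' ((h1.add h2).add h3) h4]
  refine (integral_congr_ae (Eventually.of_forall fun x =>
    (sum_weightedFluxDeriv p β h0 x).symm)).trans ?_
  rw [integral_finsetSum _ fun i _ => (integral_weightedFluxDeriv hp hu husupp h0 β i).1]
  exact Finset.sum_eq_zero fun i _ => (integral_weightedFluxDeriv hp hu husupp h0 β i).2

theorem weighted_identity {p : ℝ} (hp : 2 ≤ p) (hu : ContDiff ℝ (⊤ : ℕ∞) u)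
    (husupp : HasCompactSupport u) (h0 : (0 : EuclideanSpace ℝ (Fin N)) ∉ tsupport u) (β : ℝ) :
    (∫ x, (∑ i, (conj (u x) * partialDeriv i (partialDeriv i u) x).re * ‖x‖ ^ (-β))
          * ‖u x‖ ^ (p - 2))
        + (p - 1) * (∫ x, (∑ i, (conj (u x) * partialDeriv i u x).re ^ 2 * (‖u x‖ ^ 2)⁻¹
            * ‖x‖ ^ (-β)) * ‖u x‖ ^ (p - 2))
        + (∫ x, (∑ i, (conj (u x) * partialDeriv i u x).im ^ 2 * (‖u x‖ ^ 2)⁻¹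
            * ‖x‖ ^ (-β)) * ‖u x‖ ^ (p - 2))
        + β * (N - 2 - β) / p * (∫ x, ‖u x‖ ^ 2 * ‖x‖ ^ (-β - 2) * ‖u x‖ ^ (p - 2)) = 0 := by
  rcases hp.eq_or_lt with rfl | hp
  · obtain ⟨C, hC⟩ := husupp.exists_bound_of_continuous hu.continuous
    have hum := hu.continuous.aestronglyMeasurable (μ := volume)
    have h1 := tendsto_integral_mul_norm_rpow (integrable_finsetSum Finset.univ fun i _ =>
      integrable_re_conj_mul_laplacian hu husupp h0 β i) hum hC fun x hx => by simp [hx]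
    have h2 := tendsto_integral_mul_norm_rpow (integrable_finsetSum Finset.univ fun i _ =>
      integrable_sq_part_mul_inv_norm_sq hu husupp h0 β i Complex.continuous_re
        Complex.abs_re_le_norm) hum hC fun x hx => by simp [hx]
    have h3 := tendsto_integral_mul_norm_rpow (integrable_finsetSum Finset.univ fun i _ =>
      integrable_sq_part_mul_inv_norm_sq hu husupp h0 β i Complex.continuous_im
        Complex.abs_im_le_norm) hum hC fun x hx => by simp [hx]
    have h4 := tendsto_integral_mul_norm_rpow (integrable_norm_sq_mul hu husupp h0 (-β - 2))
      hum hC fun x hx => by simp [hx]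
    have hid : Tendsto (fun p : ℝ => p) (𝓝[>] 2) (𝓝 2) := nhdsWithin_le_nhds
    have hlim := ((h1.add ((hid.sub_const 1).mul h2)).add h3).add
      ((tendsto_const_nhds (x := β * (N - 2 - β)).div hid (by norm_num)).mul h4)
    refine tendsto_nhds_unique hlim (tendsto_const_nhds.congr' ?_)
    filter_upwards [self_mem_nhdsWithin] with p hp
    exact (weighted_identity_of_two_lt hp hu husupp h0 β).symm
  · exact weighted_identity_of_two_lt hp hu husupp h0 β

end Integrals

theorem mul_norm_rpow_sub_four {a : ℝ} {z : ℂ} (p : ℝ) (h : z = 0 → a = 0) :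
    a * ‖z‖ ^ (p - 4) = a * (‖z‖ ^ 2)⁻¹ * ‖z‖ ^ (p - 2) := by
  by_cases hz : z = 0
  · simp [h hz]
  · rw [show p - 4 = p - 2 - ((2 : ℕ) : ℝ) by push_cast; ring,
      Real.rpow_sub_natCast (norm_ne_zero_iff.mpr hz)]
    ring

/-- the real-part identity
`Re ∫_Ω (−Δu) conj(u) |u|^{p−2} |x|^{−β} dx
 = (p−1)∫ |Re(conj(u)∇u)|² |u|^{p−4} |x|^{−β} + ∫ |Im(conj(u)∇u)|² |u|^{p−4} |x|^{−β}
   + (β(N−2−β)/p) ∫ |u|^p |x|^{−β−2}`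
for smooth compactly supported complex `u` on `Ω` (the integrands vanish where `u = 0`). -/
theorem stmt_9 (N : ℕ) (hN : 2 ≤ N) (Ω : Set (EuclideanSpace ℝ (Fin N))) (hΩ : IsOpen Ω)
    (h0 : (0 : EuclideanSpace ℝ (Fin N)) ∉ closure Ω)
    (p β : ℝ) (hp : 2 ≤ p)
    (u : EuclideanSpace ℝ (Fin N) → ℂ)
    (hu : ContDiff ℝ (⊤ : ℕ∞) u) (husupp : HasCompactSupport u) (husub : tsupport u ⊆ Ω) :
    (∫ x in Ω,
        (-(∑ i : Fin N,
            fderiv ℝ (fun z => fderiv ℝ u z (EuclideanSpace.single i 1)) x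
              (EuclideanSpace.single i 1)))
          * (starRingEnd ℂ) (u x)
          * ((‖u x‖ ^ (p - 2) * ‖x‖ ^ (-β) : ℝ) : ℂ)).re
      = (p - 1) * (∫ x in Ω,
            (∑ i : Fin N,
              (((starRingEnd ℂ) (u x) * fderiv ℝ u x (EuclideanSpace.single i 1)).re) ^ 2)
              * ‖u x‖ ^ (p - 4) * ‖x‖ ^ (-β))
        + (∫ x in Ω,
            (∑ i : Fin N,
              (((starRingEnd ℂ) (u x) * fderiv ℝ u x (EuclideanSpace.single i 1)).im) ^ 2)
              * ‖u x‖ ^ (p - 4) * ‖x‖ ^ (-β))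
        + β * ((N : ℝ) - 2 - β) / p * ∫ x in Ω, ‖u x‖ ^ p * ‖x‖ ^ (-β - 2) := by
  have hu0 (x : EuclideanSpace ℝ (Fin N)) (hx : x ∉ Ω) : u x = 0 :=
    image_eq_zero_of_notMem_tsupport (mt (@husub x) hx)
  have h0' : (0 : EuclideanSpace ℝ (Fin N)) ∉ tsupport u :=
    fun h => h0 (subset_closure (husub h))
  have hp0 : p ≠ 0 := by linarith
  have key := weighted_identity hp hu husupp h0' β
  have hcont := hu.continuous
  have hcontU : Continuous fun x => ‖u x‖ ^ (p - 2) :=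
    hcont.norm.rpow_const fun _ => Or.inr (by linarith)
  have hcont2 (i : Fin N) := ((hu.partialDeriv i).partialDeriv i).continuous
  have hint : Integrable fun x => (-(∑ i : Fin N, partialDeriv i (partialDeriv i u) x))
      * conj (u x) * ((‖u x‖ ^ (p - 2) * ‖x‖ ^ (-β) : ℝ) : ℂ) := by
    refine integrable_of_continuousOn_support husupp ?_ fun x hx => by
      simp [image_eq_zero_of_notMem_tsupport hx]
    exact (by fun_prop : Continuous fun x =>
      (-(∑ i : Fin N, partialDeriv i (partialDeriv i u) x)) * conj (u x)).continuousOn.mul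
      (Complex.continuous_ofReal.comp_continuousOn
        (hcontU.continuousOn.mul (continuousOn_norm_rpow_of_zero_notMem h0' (-β))))
  rw [setIntegral_eq_integral_of_forall_compl_eq_zero (fun x hx => by simp [hu0 x hx]),
    setIntegral_eq_integral_of_forall_compl_eq_zero (fun x hx => by simp [hu0 x hx]),
    setIntegral_eq_integral_of_forall_compl_eq_zero (fun x hx => by simp [hu0 x hx]),
    setIntegral_eq_integral_of_forall_compl_eq_zero
      (fun x hx => by simp [hu0 x hx, Real.zero_rpow hp0])]
  have hL : (∫ x, (-(∑ i : Fin N, partialDeriv i (partialDeriv i u) x))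
        * conj (u x) * ((‖u x‖ ^ (p - 2) * ‖x‖ ^ (-β) : ℝ) : ℂ)).re
      = -∫ x, (∑ i, (conj (u x) * partialDeriv i (partialDeriv i u) x).re * ‖x‖ ^ (-β))
          * ‖u x‖ ^ (p - 2) := by
    rw [← integral_neg]
    refine (Complex.reCLM.integral_comp_comm hint).symm.trans (integral_congr_ae
      (Eventually.of_forall fun x => ?_))
    simp only [Complex.reCLM_apply, Complex.re_mul_ofReal]
    rw [← Finset.sum_mul, ← Complex.re_sum, ← Finset.mul_sum, neg_mul, Complex.neg_re,
      mul_comm (conj (u x))]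
    ring
  have hpart (L : ℂ → ℝ) (hL0 : L 0 = 0) :
      ∫ x, (∑ i, L (conj (u x) * partialDeriv i u x) ^ 2) * ‖u x‖ ^ (p - 4) * ‖x‖ ^ (-β)
        = ∫ x, (∑ i, L (conj (u x) * partialDeriv i u x) ^ 2 * (‖u x‖ ^ 2)⁻¹ * ‖x‖ ^ (-β))
            * ‖u x‖ ^ (p - 2) := by
    congr 1 with x
    rw [mul_norm_rpow_sub_four p fun hz => by simp [hz, hL0], ← Finset.sum_mul, ← Finset.sum_mul]
    ring
  have hR : ∫ x, ‖u x‖ ^ p * ‖x‖ ^ (-β - 2)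
      = ∫ x, ‖u x‖ ^ 2 * ‖x‖ ^ (-β - 2) * ‖u x‖ ^ (p - 2) := by
    congr 1 with x
    rw [norm_rpow_eq_sq_mul hp]
    ring
  have hre := hpart Complex.re Complex.zero_re
  have him := hpart Complex.im Complex.zero_im
  rw [← hre, ← him, ← hR] at key
  have hrearrange {a b c d : ℝ} (h : a + b + c + d = 0) : -a = b + c + d := by linarith
  exact hL.trans (hrearrange key)
end

section
/- Let N ≥ 2, α > 0, let Ω ⊆ ℝ^N be an exterior domain (the complement of a compact set) with smooth boundary and 0 ∉ closure(Ω), and let a ∈ C²(closure(Ω)) with a > 0 on closure(Ω) and lim_{|x|→∞} |x|^{−α} a(x) = a₀ for some a₀ > 0. Then for every ε ∈ (0,1) there exist a function A ∈ C²(ℝ^N) and constants A₁, A₂ > 0 such that: (i) (1−ε) a(x) ≤ ΔA(x) ≤ (1+ε) a(x) for all x ∈ Ω; (ii) A₁ (1+|x|²)^{(2+α)/2} ≤ A(x) ≤ A₂ (1+|x|²)^{(2+α)/2} for all x ∈ ℝ^N; (iii) |∇A(x)|² ≤ ( (2+α)/(N+α) + ε ) a(x) A(x) for all x ∈ Ω.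 -/
open MeasureTheory Filter

noncomputable section

/-- The Laplacian `Δφ = ∑ᵢ ∂²φ/∂xᵢ²`. -/
def lap {N : ℕ} (φ : EuclideanSpace ℝ (Fin N) → ℝ) (x : EuclideanSpace ℝ (Fin N)) : ℝ :=
  ∑ i : Fin N, fderiv ℝ (fun z => fderiv ℝ φ z (EuclideanSpace.single i 1)) x
    (EuclideanSpace.single i 1)

/-- `Ω` has a smooth boundary: near every boundary point, `Ω` is the sublevel set of a
smooth local defining function with nonvanishing differential. -/
def HasSmoothBoundary {N : ℕ} (Ω : Set (EuclideanSpace ℝ (Fin N))) : Prop :=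
  ∀ x ∈ frontier Ω, ∃ (U : Set (EuclideanSpace ℝ (Fin N)))
    (f : EuclideanSpace ℝ (Fin N) → ℝ),
    IsOpen U ∧ x ∈ U ∧ ContDiff ℝ (⊤ : ℕ∞) f ∧ fderiv ℝ f x ≠ 0 ∧
      ∀ y ∈ U, (y ∈ Ω ↔ f y < 0)

section Laplacian

variable {N : ℕ}

lemma differentiable_fderiv_apply {φ : EuclideanSpace ℝ (Fin N) → ℝ} (hφ : ContDiff ℝ 2 φ)
    (v : EuclideanSpace ℝ (Fin N)) : Differentiable ℝ fun z => fderiv ℝ φ z v :=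
  ((hφ.fderiv_right (m := 1) (by norm_num)).differentiable one_ne_zero).clm_apply
    (differentiable_const v)

lemma lap_add {φ ψ : EuclideanSpace ℝ (Fin N) → ℝ} (hφ : ContDiff ℝ 2 φ) (hψ : ContDiff ℝ 2 ψ)
    (x : EuclideanSpace ℝ (Fin N)) : lap (fun z => φ z + ψ z) x = lap φ x + lap ψ x := by
  have hd (z) : fderiv ℝ (fun z => φ z + ψ z) z = fderiv ℝ φ z + fderiv ℝ ψ z :=
    fderiv_add (hφ.differentiable two_ne_zero z) (hψ.differentiable two_ne_zero z)
  simp only [lap, hd, add_apply, ← Finset.sum_add_distrib]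
  refine Finset.sum_congr rfl fun i _ => ?_
  rw [fderiv_fun_add (differentiable_fderiv_apply hφ _ x) (differentiable_fderiv_apply hψ _ x)]
  rfl

lemma lap_add_const (φ : EuclideanSpace ℝ (Fin N) → ℝ) (c : ℝ) (x : EuclideanSpace ℝ (Fin N)) :
    lap (fun z => φ z + c) x = lap φ x := by
  simp only [lap, fderiv_add_const]

lemma lap_const_mul_comp_smul {φ : EuclideanSpace ℝ (Fin N) → ℝ} (hφ : ContDiff ℝ 2 φ)
    (c d : ℝ) (x : EuclideanSpace ℝ (Fin N)) :
    lap (fun z => c * φ (d • z)) x = c * d ^ 2 * lap φ (d • x) := by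
  have hd (z v) : fderiv ℝ (fun z => c * φ (d • z)) z v = c * d * fderiv ℝ φ (d • z) v := by
    have h : DifferentiableAt ℝ (fun z => φ (d • z)) z :=
      (hφ.differentiable two_ne_zero _).comp z (differentiableAt_id.const_smul d)
    rw [fderiv_const_mul h, fderiv_comp_smul]
    simp [mul_assoc]
  simp only [lap, hd, Finset.mul_sum]
  refine Finset.sum_congr rfl fun i _ => ?_
  have h : DifferentiableAt ℝ (fun z => fderiv ℝ φ (d • z) (EuclideanSpace.single i 1)) x :=
    (differentiable_fderiv_apply hφ (EuclideanSpace.single i 1) _).comp x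
      (differentiableAt_id.const_smul d)
  rw [fderiv_const_mul h, fderiv_comp_smul (f := fun z => fderiv ℝ φ z (EuclideanSpace.single i 1))]
  simp only [smul_apply, smul_eq_mul]
  ring

lemma hasFDerivAt_comp_norm_sq {h : ℝ → ℝ} {h' : ℝ} {x : EuclideanSpace ℝ (Fin N)}
    (hh : HasDerivAt h h' (‖x‖ ^ 2)) :
    HasFDerivAt (fun z => h (‖z‖ ^ 2)) ((2 * h') • innerSL ℝ x) x := by
  refine (hh.comp_hasFDerivAt x (hasStrictFDerivAt_norm_sq x).hasFDerivAt).congr_fderiv ?_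
  ext v
  simp
  ring

lemma lap_comp_norm_sq {h h₁ h₂ : ℝ → ℝ} (hh : ∀ s, 0 ≤ s → HasDerivAt h (h₁ s) s)
    (hh₁ : ∀ s, 0 ≤ s → HasDerivAt h₁ (h₂ s) s) (x : EuclideanSpace ℝ (Fin N)) :
    lap (fun z => h (‖z‖ ^ 2)) x = 4 * ‖x‖ ^ 2 * h₂ (‖x‖ ^ 2) + 2 * N * h₁ (‖x‖ ^ 2) := by
  have hd (z) (i : Fin N) : fderiv ℝ (fun z => h (‖z‖ ^ 2)) z (EuclideanSpace.single i 1) =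
      2 * h₁ (‖z‖ ^ 2) * z i := by
    rw [(hasFDerivAt_comp_norm_sq (hh _ (sq_nonneg ‖z‖))).fderiv]
    simp [EuclideanSpace.inner_single_right]
  have hdd (i : Fin N) : fderiv ℝ (fun z : EuclideanSpace ℝ (Fin N) => 2 * h₁ (‖z‖ ^ 2) * z i) x
      (EuclideanSpace.single i 1) = 4 * x i ^ 2 * h₂ (‖x‖ ^ 2) + 2 * h₁ (‖x‖ ^ 2) := by
    have h1 := (hasFDerivAt_comp_norm_sq (hh₁ _ (sq_nonneg ‖x‖))).const_mul 2
    have h2 : HasFDerivAt (fun z : EuclideanSpace ℝ (Fin N) => z i)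
      (EuclideanSpace.proj i : EuclideanSpace ℝ (Fin N) →L[ℝ] ℝ) x :=
      (EuclideanSpace.proj i : EuclideanSpace ℝ (Fin N) →L[ℝ] ℝ).hasFDerivAt
    rw [(h1.fun_mul h2).fderiv]
    simp [EuclideanSpace.inner_single_right]
    ring
  simp only [lap, hd, hdd, Finset.sum_add_distrib, ← Finset.sum_mul, ← Finset.mul_sum]
  rw [← EuclideanSpace.real_norm_sq_eq x]
  simp only [Finset.sum_const, Finset.card_univ, Fintype.card_fin, nsmul_eq_mul]
  ring

end Laplacian

section Convolution

variable {E F : Type} [NormedAddCommGroup E] [InnerProductSpace ℝ E] [FiniteDimensional ℝ E]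
  [MeasurableSpace E] [BorelSpace E] [NormedAddCommGroup F] [NormedSpace ℝ F]

lemma integrable_smul_comp_sub {f : E → ℝ} (hf : Continuous f) (hfc : HasCompactSupport f)
    {G : E → F} (hG : Continuous G) (x : E) : Integrable fun y => f y • G (x - y) :=
  Continuous.integrable_of_hasCompactSupport (by fun_prop) hfc.smul_right

lemma continuous_integral_smul_comp_sub {f : E → ℝ} (hf : Continuous f)
    (hfc : HasCompactSupport f) {G : E → F} (hG : Continuous G) :
    Continuous fun x => ∫ y, f y • G (x - y) := by
  have h := continuous_parametric_integral_of_continuous (μ := volume)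
    (f := fun x y => f y • G (x - y)) (by fun_prop) hfc.isCompact
  convert h using 2 with x
  refine (setIntegral_eq_integral_of_forall_compl_eq_zero fun y hy => ?_).symm
  rw [image_eq_zero_of_notMem_tsupport hy, zero_smul]

lemma hasFDerivAt_integral_smul_comp_sub {f : E → ℝ} (hf : Continuous f)
    (hfc : HasCompactSupport f) {G : E → F} (hG : ContDiff ℝ 1 G) (x : E) :
    HasFDerivAt (fun x => ∫ y, f y • G (x - y)) (∫ y, f y • fderiv ℝ G (x - y)) x := by
  have hG' : Continuous (fderiv ℝ G) := hG.continuous_fderiv one_ne_zero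
  obtain ⟨M, hM⟩ := ((isCompact_closedBall x 1).prod hfc.isCompact).exists_bound_of_continuousOn
    (f := fun p : E × E => f p.2 • fderiv ℝ G (p.1 - p.2)) (by fun_prop)
  refine hasFDerivAt_integral_of_dominated_of_fderiv_le
    (F' := fun z y => f y • fderiv ℝ G (z - y)) (bound := (tsupport f).indicator fun _ => M) (Metric.closedBall_mem_nhds x one_pos)
    (Eventually.of_forall fun z => (integrable_smul_comp_sub hf hfc hG.continuous z).1)
    (integrable_smul_comp_sub hf hfc hG.continuous x)
    (integrable_smul_comp_sub hf hfc hG' x).1 (ae_of_all _ fun y z hz => ?_) ?_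
    (ae_of_all _ fun y z _ => ?_)
  · by_cases hy : y ∈ tsupport f
    · simpa [hy] using hM (z, y) ⟨hz, hy⟩
    · simp [hy, image_eq_zero_of_notMem_tsupport hy]
  · exact (integrable_indicator_iff hfc.isCompact.measurableSet).2
      (integrableOn_const hfc.isCompact.measure_lt_top.ne)
  · refine HasFDerivAt.const_smul ?_ (f y)
    exact ((hG.differentiable one_ne_zero (z - y)).hasFDerivAt.comp z
      ((hasFDerivAt_id z).sub_const y))

lemma fderiv_integral_smul_comp_sub {f : E → ℝ} (hf : Continuous f)
    (hfc : HasCompactSupport f) {G : E → F} (hG : ContDiff ℝ 1 G) :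
    fderiv ℝ (fun x => ∫ y, f y • G (x - y)) = fun x => ∫ y, f y • fderiv ℝ G (x - y) :=
  funext fun x => (hasFDerivAt_integral_smul_comp_sub hf hfc hG x).fderiv

lemma contDiff_one_integral_smul_comp_sub {f : E → ℝ} (hf : Continuous f)
    (hfc : HasCompactSupport f) {G : E → F} (hG : ContDiff ℝ 1 G) :
    ContDiff ℝ 1 fun x => ∫ y, f y • G (x - y) := by
  rw [contDiff_one_iff_fderiv, fderiv_integral_smul_comp_sub hf hfc hG]
  exact ⟨fun x => (hasFDerivAt_integral_smul_comp_sub hf hfc hG x).differentiableAt,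
    continuous_integral_smul_comp_sub hf hfc (hG.continuous_fderiv one_ne_zero)⟩

lemma contDiff_two_integral_smul_comp_sub {f : E → ℝ} (hf : Continuous f)
    (hfc : HasCompactSupport f) {G : E → F} (hG : ContDiff ℝ 2 G) :
    ContDiff ℝ 2 fun x => ∫ y, f y • G (x - y) := by
  rw [← one_add_one_eq_two, contDiff_succ_iff_fderiv,
    fderiv_integral_smul_comp_sub hf hfc (hG.of_le one_le_two)]
  exact ⟨fun x => (hasFDerivAt_integral_smul_comp_sub hf hfc
      (hG.of_le one_le_two) x).differentiableAt, by simp,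
    contDiff_one_integral_smul_comp_sub hf hfc (hG.fderiv_right (m := 1) (by norm_num))⟩

end Convolution

lemma lap_integral_smul_comp_sub {N : ℕ} {f G : EuclideanSpace ℝ (Fin N) → ℝ} (hf : Continuous f)
    (hfc : HasCompactSupport f) (hG : ContDiff ℝ 2 G) (x : EuclideanSpace ℝ (Fin N)) :
    lap (fun x => ∫ y, f y • G (x - y)) x = ∫ y, f y • lap G (x - y) := by
  have hG' : ContDiff ℝ 1 (fderiv ℝ G) := hG.fderiv_right (by norm_num)
  have hGi (i : Fin N) : ContDiff ℝ 1 fun z => fderiv ℝ G z (EuclideanSpace.single i 1) :=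
    hG'.clm_apply contDiff_const
  have hGii (i : Fin N) : Continuous (fderiv ℝ fun z => fderiv ℝ G z (EuclideanSpace.single i 1)) :=
    (hGi i).continuous_fderiv one_ne_zero
  simp only [lap, Finset.smul_sum]
  rw [integral_finsetSum _ fun i _ => integrable_smul_comp_sub hf hfc
    ((hGii i).clm_apply continuous_const) x]
  refine Finset.sum_congr rfl fun i _ => ?_
  have hd (z) : fderiv ℝ (fun x => ∫ y, f y • G (x - y)) z (EuclideanSpace.single i 1) =
      ∫ y, f y • fderiv ℝ G (z - y) (EuclideanSpace.single i 1) := by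
    rw [fderiv_integral_smul_comp_sub hf hfc (hG.of_le one_le_two),
      ContinuousLinearMap.integral_apply
        (integrable_smul_comp_sub hf hfc hG'.continuous z)]
    rfl
  simp only [hd]
  rw [fderiv_integral_smul_comp_sub hf hfc (hGi i),
    ContinuousLinearMap.integral_apply (integrable_smul_comp_sub hf hfc (hGii i) x)]
  rfl

section Kernel

variable {N : ℕ}

/-- A smooth radial function whose Laplacian is positive, integrable, and decays like
`‖x‖ ^ (-N - 2)`: a regularization of the fundamental solution. -/
def regKernel (x : EuclideanSpace ℝ (Fin N)) : ℝ :=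
  ∫ t in (0 : ℝ)..‖x‖ ^ 2, (1 + |t|) ^ (-(N : ℝ) / 2)

lemma hasDerivAt_integral_one_add_abs_rpow (p : ℝ) {s : ℝ} (hs : 0 ≤ s) :
    HasDerivAt (fun s => ∫ t in (0 : ℝ)..s, (1 + |t|) ^ p) ((1 + s) ^ p) s := by
  have hc : Continuous fun t : ℝ => (1 + |t|) ^ p :=
    (by fun_prop : Continuous fun t : ℝ => 1 + |t|).rpow_const fun t => Or.inl (by positivity)
  have h := intervalIntegral.integral_hasDerivAt_right (hc.intervalIntegrable 0 s)
    (hc.stronglyMeasurableAtFilter _ _) hc.continuousAt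
  rwa [abs_of_nonneg hs] at h

lemma hasDerivAt_one_add_rpow (p : ℝ) {s : ℝ} (hs : 0 ≤ s) :
    HasDerivAt (fun s : ℝ => (1 + s) ^ p) (p * (1 + s) ^ (p - 1)) s := by
  have h := ((hasDerivAt_id s).const_add 1).rpow_const (p := p)
    (Or.inl (by simp only [id]; positivity))
  simpa using h

lemma contDiff_one_add_norm_sq_rpow (p : ℝ) {n : ℕ∞} :
    ContDiff ℝ n fun x : EuclideanSpace ℝ (Fin N) => (1 + ‖x‖ ^ 2) ^ p :=
  (contDiff_const.add (contDiff_norm_sq ℝ)).rpow_const_of_ne fun x => by positivity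

lemma hasFDerivAt_regKernel (x : EuclideanSpace ℝ (Fin N)) :
    HasFDerivAt regKernel ((2 * (1 + ‖x‖ ^ 2) ^ (-(N : ℝ) / 2)) • innerSL ℝ x) x :=
  hasFDerivAt_comp_norm_sq (hasDerivAt_integral_one_add_abs_rpow _ (sq_nonneg ‖x‖))

lemma contDiff_regKernel : ContDiff ℝ 2 (regKernel : EuclideanSpace ℝ (Fin N) → ℝ) := by
  rw [show (2 : WithTop ℕ∞) = 1 + 1 from one_add_one_eq_two.symm, contDiff_succ_iff_fderiv]
  refine ⟨fun x => (hasFDerivAt_regKernel x).differentiableAt, by simp, ?_⟩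
  rw [funext fun x : EuclideanSpace ℝ (Fin N) => (hasFDerivAt_regKernel x).fderiv]
  exact (contDiff_const.mul (contDiff_one_add_norm_sq_rpow _ (n := 1))).smul
    (innerSL ℝ).contDiff

lemma lap_regKernel (x : EuclideanSpace ℝ (Fin N)) :
    lap regKernel x = 2 * N * (1 + ‖x‖ ^ 2) ^ (-((N : ℝ) + 2) / 2) := by
  have h := lap_comp_norm_sq (N := N)
    (fun s hs => hasDerivAt_integral_one_add_abs_rpow (-(N : ℝ) / 2) hs)
    (fun s hs => hasDerivAt_one_add_rpow (-(N : ℝ) / 2) hs) x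
  have hr : (1 + ‖x‖ ^ 2) ^ (-(N : ℝ) / 2) =
      (1 + ‖x‖ ^ 2) * (1 + ‖x‖ ^ 2) ^ (-(N : ℝ) / 2 - 1) := by
    rw [Real.rpow_sub_one (by positivity)]
    field_simp
  rw [show -((N : ℝ) + 2) / 2 = -(N : ℝ) / 2 - 1 by ring]
  refine h.trans ?_
  rw [hr]
  ring

lemma norm_fderiv_regKernel_le (hN : 2 ≤ N) (x : EuclideanSpace ℝ (Fin N)) :
    ‖fderiv ℝ regKernel x‖ ≤ 2 := by
  have hN' : (2 : ℝ) ≤ N := by exact_mod_cast hN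
  rw [(hasFDerivAt_regKernel x).fderiv, norm_smul, innerSL_apply_norm, Real.norm_of_nonneg
    (by positivity)]
  have h1 : (1 + ‖x‖ ^ 2) ^ (-(N : ℝ) / 2) ≤ (1 + ‖x‖ ^ 2)⁻¹ := by
    rw [← Real.rpow_neg_one]
    exact Real.rpow_le_rpow_of_exponent_le (by nlinarith [sq_nonneg ‖x‖]) (by linarith)
  have h2 : (1 + ‖x‖ ^ 2)⁻¹ * ‖x‖ ≤ 1 := by
    rw [inv_mul_le_iff₀ (by positivity)]
    nlinarith [sq_nonneg (‖x‖ - 1)]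
  nlinarith [norm_nonneg x]

lemma integrable_lap_regKernel :
    Integrable (lap (regKernel : EuclideanSpace ℝ (Fin N) → ℝ)) := by
  rw [funext lap_regKernel]
  exact (integrable_rpow_neg_one_add_norm_sq (by simp)).const_mul _

lemma integrable_lap_regKernel_mul_norm :
    Integrable fun x : EuclideanSpace ℝ (Fin N) => lap regKernel x * ‖x‖ := by
  have hi : Integrable fun x : EuclideanSpace ℝ (Fin N) =>
      2 * N * (1 + ‖x‖ ^ 2) ^ (-((N : ℝ) + 1) / 2) :=
    (integrable_rpow_neg_one_add_norm_sq (by simp)).const_mul _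
  refine hi.mono' (integrable_lap_regKernel.1.mul continuous_norm.aestronglyMeasurable)
    (ae_of_all _ fun x => ?_)
  have hx : ‖x‖ ≤ (1 + ‖x‖ ^ 2) ^ (1 / 2 : ℝ) := by
    rw [← Real.sqrt_eq_rpow]
    exact Real.le_sqrt_of_sq_le (by linarith)
  rw [lap_regKernel, Real.norm_of_nonneg (by positivity),
    show -((N : ℝ) + 1) / 2 = -((N : ℝ) + 2) / 2 + 1 / 2 by ring, Real.rpow_add (by positivity),
    mul_assoc]
  gcongr

lemma integral_lap_regKernel_pos (hN : 2 ≤ N) :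
    0 < ∫ x : EuclideanSpace ℝ (Fin N), lap regKernel x := by
  have hpos (x : EuclideanSpace ℝ (Fin N)) : 0 < lap regKernel x := by
    rw [lap_regKernel]
    positivity
  rw [integral_pos_iff_support_of_nonneg (fun x => (hpos x).le) integrable_lap_regKernel,
    Function.support_eq_univ fun x => (hpos x).ne']
  exact Measure.measure_univ_pos.2 (NeZero.ne _)

end Kernel

lemma exists_abs_sub_le_add_mul_norm {E : Type*} [NormedAddCommGroup E] {f : E → ℝ}
    (hf : Continuous f) (hfc : HasCompactSupport f) {η : ℝ} (hη : 0 < η) :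
    ∃ L, 0 ≤ L ∧ ∀ x y, |f x - f y| ≤ η + L * ‖x - y‖ := by
  obtain ⟨d, hd, hfd⟩ := Metric.uniformContinuous_iff.1
    (hfc.uniformContinuous_of_continuous hf) η hη
  obtain ⟨M, hM⟩ := hfc.exists_bound_of_continuous hf
  have hM0 : 0 ≤ M := (norm_nonneg _).trans (hM 0)
  refine ⟨2 * M / d, by positivity, fun x y => ?_⟩
  rcases lt_or_ge ‖x - y‖ d with h | h
  · have := hfd (a := x) (b := y) (by rwa [dist_eq_norm])
    rw [Real.dist_eq] at this
    have : 0 ≤ 2 * M / d * ‖x - y‖ := by positivity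
    linarith
  · have h1 : |f x - f y| ≤ 2 * M := by
      have := abs_sub (f x) (f y)
      have := hM x
      have := hM y
      simp only [Real.norm_eq_abs] at *
      linarith
    have h2 : 2 * M ≤ 2 * M / d * ‖x - y‖ := by
      rw [div_mul_eq_mul_div, le_div_iff₀ hd]
      gcongr
    linarith

/-- The Poisson equation with continuous compactly supported right-hand side can be solved up to
an arbitrarily small uniform error by a function with bounded gradient. -/
lemma exists_lap_approx {N : ℕ} (hN : 2 ≤ N) {f : EuclideanSpace ℝ (Fin N) → ℝ}
    (hf : Continuous f) (hfc : HasCompactSupport f) {η : ℝ} (hη : 0 < η) :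
    ∃ (u : EuclideanSpace ℝ (Fin N) → ℝ) (C : ℝ), ContDiff ℝ 2 u ∧
      (∀ x, |lap u x - f x| ≤ η) ∧ ∀ x, ‖fderiv ℝ u x‖ ≤ C := by
  obtain ⟨L, hL, hfL⟩ := exists_abs_sub_le_add_mul_norm hf hfc (half_pos hη)
  set I := ∫ x : EuclideanSpace ℝ (Fin N), lap regKernel x with hI
  set J := ∫ x : EuclideanSpace ℝ (Fin N), lap regKernel x * ‖x‖ with hJ
  have hIpos : 0 < I := integral_lap_regKernel_pos hN
  have hφ (x : EuclideanSpace ℝ (Fin N)) : 0 ≤ lap regKernel x := by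
    rw [lap_regKernel]
    positivity
  have hJ0 : 0 ≤ J := integral_nonneg fun x => mul_nonneg (hφ x) (norm_nonneg x)
  obtain ⟨δ, hδ, hδJ⟩ : ∃ δ : ℝ, 0 < δ ∧ L * δ * J ≤ η / 2 * I := by
    refine ⟨η / 2 * I / (L * J + 1), by positivity, ?_⟩
    rw [mul_div_assoc', div_mul_eq_mul_div, div_le_iff₀ (by positivity)]
    nlinarith [mul_nonneg hL hJ0, mul_pos hη hIpos]
  have hg : Continuous fun y => f (δ • y) := by fun_prop
  have hgc : HasCompactSupport fun y => f (δ • y) :=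
    hfc.comp_homeomorph (Homeomorph.smulOfNeZero δ hδ.ne')
  set v : EuclideanSpace ℝ (Fin N) → ℝ := fun x => ∫ y, f (δ • y) • regKernel (x - y) with hv
  have hv2 : ContDiff ℝ 2 v := contDiff_two_integral_smul_comp_sub hg hgc contDiff_regKernel
  have hlap (x) : lap (fun z => δ ^ 2 / I * v (δ⁻¹ • z)) x =
      (∫ z, f (x - δ • z) * lap regKernel z) / I := by
    rw [lap_const_mul_comp_smul hv2, hv, lap_integral_smul_comp_sub hg hgc contDiff_regKernel,
      ← integral_sub_left_eq_self _ volume (δ⁻¹ • x)]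
    simp only [smul_sub, smul_inv_smul₀ hδ.ne', sub_sub_cancel, smul_eq_mul]
    field_simp
  have hint (x) : Integrable fun z => f (x - δ • z) * lap regKernel z := by
    obtain ⟨M, hM⟩ := hfc.exists_bound_of_continuous hf
    exact integrable_lap_regKernel.bdd_mul
      (by fun_prop : Continuous fun z => f (x - δ • z)).aestronglyMeasurable
      (ae_of_all _ fun z => hM _)
  refine ⟨fun z => δ ^ 2 / I * v (δ⁻¹ • z),
    |δ ^ 2 / I| * (|δ⁻¹| * ∫ y, |f (δ • y)| * 2), ?_, fun x => ?_, fun x => ?_⟩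
  · exact contDiff_const.mul (hv2.comp (contDiff_id.const_smul δ⁻¹))
  · have hsub : (∫ z, f (x - δ • z) * lap regKernel z) - I * f x =
        ∫ z, (f (x - δ • z) - f x) * lap regKernel z := by
      simp only [sub_mul]
      rw [integral_sub (hint x) (integrable_lap_regKernel.const_mul _), integral_const_mul, hI,
        mul_comm]
    have hbound : |(∫ z, f (x - δ • z) * lap regKernel z) - I * f x| ≤
        η / 2 * I + L * δ * J := by
      rw [hsub, hI, hJ, ← integral_const_mul, ← integral_const_mul, ← integral_add
        (integrable_lap_regKernel.const_mul _) (integrable_lap_regKernel_mul_norm.const_mul _),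
        ← Real.norm_eq_abs]
      refine norm_integral_le_of_norm_le ((integrable_lap_regKernel.const_mul _).add
        (integrable_lap_regKernel_mul_norm.const_mul _)) (ae_of_all _ fun z => ?_)
      rw [Real.norm_eq_abs, abs_mul, abs_of_nonneg (hφ z)]
      have h := hfL (x - δ • z) x
      rw [sub_sub_cancel_left, norm_neg, norm_smul, Real.norm_of_nonneg hδ.le] at h
      calc _ ≤ (η / 2 + L * (δ * ‖z‖)) * lap regKernel z := by
            gcongr
            exact hφ z
        _ = _ := by ring
    rw [hlap, div_sub' hIpos.ne', abs_div, abs_of_pos hIpos, div_le_iff₀ hIpos]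
    linarith
  · have hd : DifferentiableAt ℝ (fun z => v (δ⁻¹ • z)) x :=
      (hv2.differentiable two_ne_zero _).comp x (differentiableAt_id.const_smul δ⁻¹)
    rw [fderiv_const_mul hd, norm_smul, fderiv_comp_smul, norm_smul, hv,
      fderiv_integral_smul_comp_sub hg hgc (contDiff_regKernel.of_le one_le_two)]
    simp only [Real.norm_eq_abs]
    gcongr
    refine norm_integral_le_of_norm_le ?_ (ae_of_all _ fun y => ?_)
    · exact ((hg.integrable_of_hasCompactSupport hgc).abs).mul_const 2
    · rw [norm_smul, Real.norm_eq_abs]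
      gcongr
      exact norm_fderiv_regKernel_le hN _

section PowerFunction

variable {N : ℕ}

lemma one_add_sq_rpow_eq (α r : ℝ) :
    (1 + r ^ 2) ^ ((2 + α) / 2) = (1 + r ^ 2) * (1 + r ^ 2) ^ (α / 2) := by
  rw [show (2 + α) / 2 = 1 + α / 2 by ring, Real.rpow_add (by positivity), Real.rpow_one]

lemma one_le_one_add_sq_rpow {p : ℝ} (hp : 0 ≤ p) (r : ℝ) : 1 ≤ (1 + r ^ 2) ^ p :=
  Real.one_le_rpow (by nlinarith [sq_nonneg r]) hp

lemma lap_const_mul_one_add_norm_sq_rpow (κ α : ℝ) (x : EuclideanSpace ℝ (Fin N)) :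
    lap (fun z => κ * (1 + ‖z‖ ^ 2) ^ ((2 + α) / 2)) x =
      κ * (2 + α) * (1 + ‖x‖ ^ 2) ^ (α / 2) * (N + α - α * (1 + ‖x‖ ^ 2)⁻¹) := by
  have h := lap_comp_norm_sq (N := N)
    (fun s hs => (hasDerivAt_one_add_rpow ((2 + α) / 2) hs).const_mul κ)
    (fun s hs => ((hasDerivAt_one_add_rpow ((2 + α) / 2 - 1) hs).const_mul _).const_mul κ) x
  refine h.trans ?_
  rw [show (2 + α) / 2 - 1 = α / 2 by ring, Real.rpow_sub_one (by positivity)]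
  field_simp
  ring

lemma norm_fderiv_const_mul_one_add_norm_sq_rpow_le {κ α : ℝ} (hκ : 0 ≤ κ) (hα : 0 ≤ α)
    (x : EuclideanSpace ℝ (Fin N)) :
    ‖fderiv ℝ (fun z : EuclideanSpace ℝ (Fin N) => κ * (1 + ‖z‖ ^ 2) ^ ((2 + α) / 2)) x‖ ^ 2 ≤
      κ ^ 2 * (2 + α) ^ 2 * ((1 + ‖x‖ ^ 2) ^ (α / 2)) ^ 2 * (1 + ‖x‖ ^ 2) := by
  have h := hasFDerivAt_comp_norm_sq
    ((hasDerivAt_one_add_rpow ((2 + α) / 2) (sq_nonneg ‖x‖)).const_mul κ)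
  rw [h.fderiv, norm_smul, innerSL_apply_norm, Real.norm_of_nonneg (by positivity),
    show (2 + α) / 2 - 1 = α / 2 by ring]
  calc _ = κ ^ 2 * (2 + α) ^ 2 * ((1 + ‖x‖ ^ 2) ^ (α / 2)) ^ 2 * ‖x‖ ^ 2 := by ring
    _ ≤ _ := by
      gcongr
      linarith

lemma tendsto_inv_one_add_norm_sq_cocompact :
    Tendsto (fun x : EuclideanSpace ℝ (Fin N) => (1 + ‖x‖ ^ 2)⁻¹)
      (cocompact (EuclideanSpace ℝ (Fin N))) (nhds 0) :=
  (tendsto_atTop_add_const_left _ _ ((tendsto_pow_atTop two_ne_zero).comp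
    (tendsto_norm_cocompact_atTop (E := EuclideanSpace ℝ (Fin N))))).inv_tendsto_atTop

/-- Weights asymptotic to `a₀ * ‖x‖ ^ α` are asymptotic to `a₀ * (1 + ‖x‖ ^ 2) ^ (α / 2)`. -/
lemma tendsto_one_add_norm_sq_rpow_mul {α a₀ : ℝ} {a : EuclideanSpace ℝ (Fin N) → ℝ}
    (h : Tendsto (fun x : EuclideanSpace ℝ (Fin N) => ‖x‖ ^ (-α) * a x)
      (cocompact (EuclideanSpace ℝ (Fin N))) (nhds a₀)) :
    Tendsto (fun x : EuclideanSpace ℝ (Fin N) => ((1 + ‖x‖ ^ 2) ^ (α / 2))⁻¹ * a x)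
      (cocompact (EuclideanSpace ℝ (Fin N))) (nhds a₀) := by
  have h1 : Tendsto (fun x : EuclideanSpace ℝ (Fin N) => (1 - (1 + ‖x‖ ^ 2)⁻¹) ^ (α / 2))
      (cocompact (EuclideanSpace ℝ (Fin N))) (nhds 1) := by
    have := (tendsto_inv_one_add_norm_sq_cocompact (N := N)).const_sub 1
    rw [sub_zero] at this
    simpa using this.rpow_const (p := α / 2) (Or.inl one_ne_zero)
  have h2 := h1.mul h
  rw [one_mul] at h2
  refine h2.congr' ?_
  filter_upwards [(tendsto_norm_cocompact_atTop
    (E := EuclideanSpace ℝ (Fin N))).eventually_gt_atTop 0] with x hx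
  rw [show 1 - (1 + ‖x‖ ^ 2)⁻¹ = ‖x‖ ^ 2 / (1 + ‖x‖ ^ 2) by field_simp; ring,
    Real.div_rpow (by positivity) (by positivity), ← Real.rpow_natCast, ← Real.rpow_mul hx.le,
    Real.rpow_neg hx.le, show ((2 : ℕ) : ℝ) * (α / 2) = α by push_cast; ring]
  have : 0 < ‖x‖ ^ α := Real.rpow_pos_of_pos hx α
  field_simp

lemma exists_forall_le_norm_of_eventually_cocompact {p : EuclideanSpace ℝ (Fin N) → Prop}
    (h : ∀ᶠ x in cocompact (EuclideanSpace ℝ (Fin N)), p x) : ∃ R : ℝ, ∀ x, R < ‖x‖ → p x := by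
  rw [← Metric.cobounded_eq_cocompact,
    (Metric.hasBasis_cobounded_compl_closedBall 0).eventually_iff] at h
  obtain ⟨R, -, hR⟩ := h
  exact ⟨R, fun x hx => hR (by simpa using hx)⟩

/-- Outside a large ball, a weight asymptotic to `a₀ * ‖x‖ ^ α` is close both to
`a₀ * (1 + ‖x‖ ^ 2) ^ (α / 2)` and to the Laplacian of the corresponding power function. -/
lemma exists_radius_weight_bounds {α a₀ κ τ : ℝ} (hα : 0 < α) (ha₀ : 0 < a₀)
    (hκ : κ * (2 + α) * (N + α) = a₀) {a : EuclideanSpace ℝ (Fin N) → ℝ}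
    (h : Tendsto (fun x : EuclideanSpace ℝ (Fin N) => ‖x‖ ^ (-α) * a x)
      (cocompact (EuclideanSpace ℝ (Fin N))) (nhds a₀)) (hτ : 0 < τ) (hτ' : τ ≤ 1 / 2) :
    ∃ R : ℝ, ∀ x, R < ‖x‖ → (1 - τ) * (a₀ * (1 + ‖x‖ ^ 2) ^ (α / 2)) ≤ a x ∧
      |a x - lap (fun z => κ * (1 + ‖z‖ ^ 2) ^ ((2 + α) / 2)) x| ≤ 4 * τ * a x := by
  have hNα : 0 < (N : ℝ) + α := by positivity
  have h1 : Tendsto (fun x : EuclideanSpace ℝ (Fin N) => κ * (2 + α) * α * (1 + ‖x‖ ^ 2)⁻¹)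
      (cocompact (EuclideanSpace ℝ (Fin N))) (nhds 0) := by
    simpa using tendsto_inv_one_add_norm_sq_cocompact.const_mul (κ * (2 + α) * α)
  obtain ⟨R, hR⟩ := exists_forall_le_norm_of_eventually_cocompact
    (((Metric.tendsto_nhds.1 (tendsto_one_add_norm_sq_rpow_mul h)) (τ * a₀) (by positivity)).and
      ((Metric.tendsto_nhds.1 h1) (τ * a₀) (by positivity)))
  refine ⟨R, fun x hx => ?_⟩
  obtain ⟨hx1, hx2⟩ := hR x hx
  rw [lap_const_mul_one_add_norm_sq_rpow]
  have hW : 0 < (1 + ‖x‖ ^ 2) ^ (α / 2) := by positivity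
  set W := (1 + ‖x‖ ^ 2) ^ (α / 2)
  set v := (1 + ‖x‖ ^ 2)⁻¹
  obtain ⟨q, hq⟩ : ∃ q, q = W⁻¹ * a x := ⟨_, rfl⟩
  have hax : a x = W * q := by rw [hq]; field_simp
  rw [Real.dist_eq, ← hq, abs_lt] at hx1
  rw [Real.dist_eq, abs_lt] at hx2
  have hq1 : (1 - τ) * a₀ ≤ q := by linarith
  have hb : κ * (2 + α) * W * (N + α - α * v) = W * (a₀ - κ * (2 + α) * α * v) := by
    rw [← hκ]
    ring
  rw [hb, hax, ← mul_sub, abs_mul, abs_of_pos hW, show 4 * τ * (W * q) = W * (4 * τ * q) by ring,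
    show (1 - τ) * (a₀ * W) = W * ((1 - τ) * a₀) by ring]
  refine ⟨by gcongr, mul_le_mul_of_nonneg_left (abs_le.2 ?_) hW.le⟩
  have : 2 * (τ * a₀) ≤ 4 * τ * q := by nlinarith [mul_pos hτ ha₀]
  constructor <;> linarith

end PowerFunction

/-- If the weight `a` is asymptotic to the Laplacian of a power function, some bounded-gradient
perturbation of that function has Laplacian close to `a` on the whole of `Ω`. -/
lemma exists_lap_add_approx {N : ℕ} (hN : 2 ≤ N) {Ω : Set (EuclideanSpace ℝ (Fin N))}
    {a P : EuclideanSpace ℝ (Fin N) → ℝ} (ha : ContinuousOn a (closure Ω))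
    (hP : Continuous (lap P)) {c σ R : ℝ} (hc : 0 < c) (hσ : 0 < σ) (hca : ∀ x ∈ Ω, c ≤ a x)
    (hR : ∀ x ∈ Ω, R < ‖x‖ → |a x - lap P x| ≤ σ * a x) :
    ∃ (u : EuclideanSpace ℝ (Fin N) → ℝ) (C : ℝ), ContDiff ℝ 2 u ∧
      (∀ x ∈ Ω, |a x - (lap P x + lap u x)| ≤ 2 * σ * a x) ∧ ∀ x, ‖fderiv ℝ u x‖ ≤ C := by
  obtain ⟨g, hg⟩ := ContinuousMap.exists_restrict_eq isClosed_closure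
    ⟨(closure Ω).domRestrict fun x => a x - lap P x, (ha.sub hP.continuousOn).domRestrict⟩
  have hga (x) (hx : x ∈ Ω) : g x = a x - lap P x :=
    DFunLike.congr_fun hg ⟨x, subset_closure hx⟩
  set χ : EuclideanSpace ℝ (Fin N) → ℝ := fun x => max 0 (min 1 (R + 1 - ‖x‖))
  have hχ0 (x) : 0 ≤ χ x := le_max_left _ _
  have hχ1 (x) : χ x ≤ 1 := max_le zero_le_one (min_le_left _ _)
  have hχR (x) (hx : ‖x‖ ≤ R) : χ x = 1 := by
    simp only [χ]
    rw [min_eq_left (by linarith), max_eq_right zero_le_one]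
  have hχc : HasCompactSupport fun x => χ x * g x := by
    refine HasCompactSupport.intro (isCompact_closedBall 0 (R + 1)) fun x hx => ?_
    have hx' : R + 1 < ‖x‖ := by simpa using hx
    simp only [χ]
    rw [max_eq_left ((min_le_right _ _).trans (by linarith)), zero_mul]
  obtain ⟨u, C, hu, hlap, hC⟩ := exists_lap_approx hN (by fun_prop) hχc (mul_pos hσ hc)
  refine ⟨u, C, hu, fun x hx => ?_, hC⟩
  have h1 : |(1 - χ x) * (a x - lap P x)| ≤ σ * a x := by
    have h0 : 0 ≤ σ * a x := mul_nonneg hσ.le (hc.le.trans (hca x hx))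
    rcases le_or_gt ‖x‖ R with h | h
    · simpa [hχR x h] using h0
    · rw [abs_mul, abs_of_nonneg (sub_nonneg.2 (hχ1 x))]
      exact (mul_le_of_le_one_left (abs_nonneg _) (by linarith [hχ0 x])).trans (hR x hx h)
  have h2 := hlap x
  rw [hga x hx] at h2
  have h3 : σ * c ≤ σ * a x := mul_le_mul_of_nonneg_left (hca x hx) hσ.le
  rw [abs_le] at h1 h2 ⊢
  constructor <;> nlinarith

lemma sq_add_le_weighted (p q : ℝ) {τ : ℝ} (hτ : 0 < τ) :
    (p + q) ^ 2 ≤ (1 + τ) * p ^ 2 + (1 + 1 / τ) * q ^ 2 := by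
  have h : (1 + τ) * p ^ 2 + (1 + 1 / τ) * q ^ 2 - (p + q) ^ 2 = (τ * p - q) ^ 2 / τ := by
    field_simp
    ring
  have : 0 ≤ (τ * p - q) ^ 2 / τ := by positivity
  linarith

/-- The gradient bound far from the origin, with `p` and `q` the gradients of the main part and of
the perturbation, `W = (1 + ‖x‖ ^ 2) ^ (α / 2)`, and `w = 1 + ‖x‖ ^ 2`. -/
lemma sq_add_le_of_far {r ε τ κ β a₀ W w p q μ a A : ℝ} (hr : 0 ≤ r) (hr1 : r ≤ 1) (hε : 0 < ε)
    (hε1 : ε < 1) (hτ : τ = ε / 8) (hκ : 0 < κ) (ha₀ : 0 < a₀) (hra : r * (a₀ * κ) = κ ^ 2 * β ^ 2)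
    (hW : 1 ≤ W) (hw : 0 ≤ w) (hμ : 0 ≤ μ) (hp : p ^ 2 ≤ κ ^ 2 * β ^ 2 * W ^ 2 * w)
    (hq : (1 + 1 / τ) * q ^ 2 ≤ ε * ((1 - τ) * a₀ * μ)) (ha : (1 - τ) * (a₀ * W) ≤ a)
    (hA : (1 - τ) * (κ * (w * W)) + μ ≤ A) : (p + q) ^ 2 ≤ (r + ε) * (a * A) := by
  have hτ0 : 0 < τ := by linarith
  have hτ1 : 0 < 1 - τ := by linarith
  have hW0 : 0 < W := by linarith
  have hX : 0 ≤ a₀ * κ * W ^ 2 * w := by positivity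
  have hcoef : (1 + τ) * r ≤ (r + ε) * (1 - τ) ^ 2 := by
    rw [hτ]
    nlinarith [mul_nonneg hr hε.le, mul_nonneg hε.le (sub_nonneg.2 hr1),
      mul_nonneg hε.le (sub_nonneg.2 hε1.le), pow_pos hε 3, mul_nonneg (sq_nonneg ε) hr]
  have h1 : (1 + τ) * p ^ 2 ≤ (1 + τ) * r * (a₀ * κ * W ^ 2 * w) := by
    calc (1 + τ) * p ^ 2 ≤ (1 + τ) * (κ ^ 2 * β ^ 2 * W ^ 2 * w) := by gcongr
      _ = (1 + τ) * r * (a₀ * κ * W ^ 2 * w) := by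
        rw [← hra]
        ring
  have h2 : ε * ((1 - τ) * a₀ * μ) ≤ (r + ε) * ((1 - τ) * a₀ * μ * W) := by
    have : (1 - τ) * a₀ * μ ≤ (1 - τ) * a₀ * μ * W := le_mul_of_one_le_right (by positivity) hW
    calc ε * ((1 - τ) * a₀ * μ) ≤ ε * ((1 - τ) * a₀ * μ * W) := by gcongr
      _ ≤ _ := by
        gcongr
        linarith
  calc (p + q) ^ 2 ≤ (1 + τ) * p ^ 2 + (1 + 1 / τ) * q ^ 2 := sq_add_le_weighted p q hτ0
    _ ≤ (r + ε) * (1 - τ) ^ 2 * (a₀ * κ * W ^ 2 * w) + (r + ε) * ((1 - τ) * a₀ * μ * W) :=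
      add_le_add (h1.trans (by gcongr)) (hq.trans h2)
    _ = (r + ε) * ((1 - τ) * (a₀ * W) * ((1 - τ) * (κ * (w * W)) + μ)) := by ring
    _ ≤ _ := by
      have : 0 ≤ a := le_trans (by positivity) ha
      gcongr

lemma exists_pos_forall_le_of_bound_far {N : ℕ} {s : Set (EuclideanSpace ℝ (Fin N))}
    (hs : IsClosed s) {a : EuclideanSpace ℝ (Fin N) → ℝ} (ha : ContinuousOn a s)
    (hpos : ∀ x ∈ s, 0 < a x) {m R : ℝ} (hm : 0 < m) (hR : ∀ x, R < ‖x‖ → m ≤ a x) :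
    ∃ c, 0 < c ∧ c ≤ m ∧ ∀ x ∈ s, c ≤ a x := by
  obtain ⟨c, hc, hca⟩ := ((isCompact_closedBall 0 R).inter_left hs).exists_forall_le'
    (ha.mono Set.inter_subset_left) (a := 0) fun x hx => hpos x hx.1
  refine ⟨min c m, lt_min hc hm, min_le_right _ _, fun x hx => ?_⟩
  rcases le_or_gt ‖x‖ R with h | h
  · exact (min_le_left _ _).trans (hca x ⟨hx, by simpa using h⟩)
  · exact (min_le_right _ _).trans (hR x h)

/-- construction of the auxiliary function `A_ε` (Lemma 3.1 of the paper):
for every `ε ∈ (0,1)` there are `A ∈ C²(ℝ^N)` and `A₁, A₂ > 0` with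
(i) `(1−ε)a ≤ ΔA ≤ (1+ε)a` on `Ω`;
(ii) `A₁⟨x⟩^{2+α} ≤ A(x) ≤ A₂⟨x⟩^{2+α}` on `ℝ^N`;
(iii) `|∇A|² ≤ ((2+α)/(N+α)+ε) a A` on `Ω`. -/
theorem stmt_14 (N : ℕ) (hN : 2 ≤ N) (α : ℝ) (hα : 0 < α)
    (Ω : Set (EuclideanSpace ℝ (Fin N))) (hΩopen : IsOpen Ω)
    (hΩext : IsCompact Ωᶜ) (hΩbdry : HasSmoothBoundary Ω)
    (h0 : (0 : EuclideanSpace ℝ (Fin N)) ∉ closure Ω)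
    (a : EuclideanSpace ℝ (Fin N) → ℝ) (ha : ContDiffOn ℝ 2 a (closure Ω))
    (hapos : ∀ x ∈ closure Ω, 0 < a x)
    (a₀ : ℝ) (ha₀ : 0 < a₀)
    (halim : Tendsto (fun x : EuclideanSpace ℝ (Fin N) => ‖x‖ ^ (-α) * a x)
      (cocompact (EuclideanSpace ℝ (Fin N))) (nhds a₀)) :
    ∀ ε ∈ Set.Ioo (0 : ℝ) 1,
      ∃ (A : EuclideanSpace ℝ (Fin N) → ℝ) (A₁ A₂ : ℝ),
        ContDiff ℝ 2 A ∧ 0 < A₁ ∧ 0 < A₂ ∧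
        (∀ x ∈ Ω, (1 - ε) * a x ≤ lap A x ∧ lap A x ≤ (1 + ε) * a x) ∧
        (∀ x, A₁ * (1 + ‖x‖ ^ 2) ^ ((2 + α) / 2) ≤ A x
            ∧ A x ≤ A₂ * (1 + ‖x‖ ^ 2) ^ ((2 + α) / 2)) ∧
        (∀ x ∈ Ω, ‖gradient A x‖ ^ 2 ≤ ((2 + α) / ((N : ℝ) + α) + ε) * (a x * A x)) := by
  rintro ε ⟨hε, hε1⟩
  obtain ⟨τ, hτ⟩ : ∃ τ, τ = ε / 8 := ⟨_, rfl⟩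
  have hτ0 : 0 < τ := by linarith
  have hτ1 : 0 < 1 - τ := by linarith
  have hN' : (2 : ℝ) ≤ N := by exact_mod_cast hN
  have hNα : 0 < (N : ℝ) + α := by linarith
  obtain ⟨κ, hκ⟩ : ∃ κ, κ = a₀ / ((2 + α) * (N + α)) := ⟨_, rfl⟩
  have hκ0 : 0 < κ := by rw [hκ]; positivity
  have hκa : κ * (2 + α) * (N + α) = a₀ := by rw [hκ]; field_simp
  have hra : (2 + α) / (N + α) * (a₀ * κ) = κ ^ 2 * (2 + α) ^ 2 := by
    rw [← hκa]
    field_simp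
  have hr0 : 0 ≤ (2 + α) / (N + α) := by positivity
  have hr1 : (2 + α) / (N + α) ≤ 1 := by
    rw [div_le_one hNα]
    linarith
  set P : EuclideanSpace ℝ (Fin N) → ℝ := fun z => κ * (1 + ‖z‖ ^ 2) ^ ((2 + α) / 2) with hPdef
  have hP : ContDiff ℝ 2 P := contDiff_const.mul (contDiff_one_add_norm_sq_rpow _ (n := 2))
  have hlapP : Continuous (lap P) := by
    rw [funext (lap_const_mul_one_add_norm_sq_rpow (N := N) κ α)]
    have hw : Continuous fun x : EuclideanSpace ℝ (Fin N) => (1 + ‖x‖ ^ 2) ^ (α / 2) :=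
      (contDiff_one_add_norm_sq_rpow (α / 2) (n := 0)).continuous
    have hw' : Continuous fun x : EuclideanSpace ℝ (Fin N) => (1 + ‖x‖ ^ 2)⁻¹ :=
      Continuous.inv₀ (by fun_prop) fun x => by positivity
    fun_prop
  obtain ⟨R, hR⟩ := exists_radius_weight_bounds hα ha₀ hκa halim hτ0 (by linarith)
  have hW1 (x : EuclideanSpace ℝ (Fin N)) : 1 ≤ (1 + ‖x‖ ^ 2) ^ (α / 2) :=
    one_le_one_add_sq_rpow (by positivity) _
  obtain ⟨c, hc, hcm, hca⟩ := exists_pos_forall_le_of_bound_far isClosed_closure ha.continuousOn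
    hapos (mul_pos hτ1 ha₀) fun x hx => (hR x hx).1.trans' <| by
      gcongr
      exact le_mul_of_one_le_right ha₀.le (hW1 x)
  obtain ⟨u, C, hu, hlap, hC⟩ := exists_lap_add_approx hN ha.continuousOn hlapP hc
    (by positivity : 0 < 4 * τ) (fun x hx => hca x (subset_closure hx)) fun x _ hx => (hR x hx).2
  have hC0 : 0 ≤ C := (norm_nonneg _).trans (hC 0)
  obtain ⟨D, hD0, hD⟩ : ∃ D, 0 ≤ D ∧ ∀ x, |u x| ≤ D * √(1 + ‖x‖ ^ 2) := by
    refine ⟨|u 0| + C, by positivity, fun x => ?_⟩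
    have h1 := convex_univ.norm_image_sub_le_of_norm_fderiv_le (𝕜 := ℝ)
      (fun y _ => hu.differentiable two_ne_zero y) (fun y _ => hC y) (Set.mem_univ 0)
      (Set.mem_univ x)
    rw [sub_zero, Real.norm_eq_abs] at h1
    have h2 := abs_sub_abs_le_abs_sub (u x) (u 0)
    have h3 : ‖x‖ ≤ √(1 + ‖x‖ ^ 2) := Real.le_sqrt_of_sq_le (by linarith)
    have h4 : 1 ≤ √(1 + ‖x‖ ^ 2) := Real.one_le_sqrt.2 (by linarith [sq_nonneg ‖x‖])
    nlinarith [mul_le_mul_of_nonneg_left h3 hC0, mul_le_mul_of_nonneg_left h4 (abs_nonneg (u 0))]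
  obtain ⟨M, hM⟩ : ∃ M, M = κ ^ 2 * (2 + α) ^ 2 * ((1 + R ^ 2) ^ (α / 2)) ^ 2 * (1 + R ^ 2) :=
    ⟨_, rfl⟩
  have hM0 : 0 ≤ M := by rw [hM]; positivity
  obtain ⟨μ, hμ⟩ : ∃ μ, μ = ((1 + τ) * M + (1 + 1 / τ) * C ^ 2) / (ε * c) := ⟨_, rfl⟩
  have hμ0 : 0 ≤ μ := by rw [hμ]; positivity
  have hμc : ε * (c * μ) = (1 + τ) * M + (1 + 1 / τ) * C ^ 2 := by rw [hμ]; field_simp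
  obtain ⟨lam, hlam⟩ : ∃ lam, lam = D ^ 2 / (4 * (τ * κ)) + μ := ⟨_, rfl⟩
  have hlam0 : 0 ≤ lam := by rw [hlam]; positivity
  have hlow (x) : (1 - τ) * P x + μ ≤ P x + u x + lam := by
    have h1 : D * √(1 + ‖x‖ ^ 2) ≤ τ * κ * (1 + ‖x‖ ^ 2) + D ^ 2 / (4 * (τ * κ)) := by
      have hs : √(1 + ‖x‖ ^ 2) ^ 2 = 1 + ‖x‖ ^ 2 := Real.sq_sqrt (by positivity)
      have h : τ * κ * √(1 + ‖x‖ ^ 2) ^ 2 + D ^ 2 / (4 * (τ * κ)) - D * √(1 + ‖x‖ ^ 2) =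
          (2 * (τ * κ) * √(1 + ‖x‖ ^ 2) - D) ^ 2 / (4 * (τ * κ)) := by
        field_simp
        ring
      have : 0 ≤ (2 * (τ * κ) * √(1 + ‖x‖ ^ 2) - D) ^ 2 / (4 * (τ * κ)) := by positivity
      rw [hs] at h
      linarith
    have h2 : τ * κ * (1 + ‖x‖ ^ 2) ≤ τ * P x := by
      simp only [hPdef]
      rw [one_add_sq_rpow_eq, mul_assoc]
      gcongr
      exact le_mul_of_one_le_right (by positivity) (hW1 x)
    have := (abs_le.1 (hD x)).1
    linarith
  have hup (x) : P x + u x + lam ≤ (κ + D + lam) * (1 + ‖x‖ ^ 2) ^ ((2 + α) / 2) := by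
    have h1 : 1 ≤ (1 + ‖x‖ ^ 2) ^ ((2 + α) / 2) := one_le_one_add_sq_rpow (by positivity) _
    have h2 : √(1 + ‖x‖ ^ 2) ≤ (1 + ‖x‖ ^ 2) ^ ((2 + α) / 2) := by
      rw [Real.sqrt_eq_rpow]
      exact Real.rpow_le_rpow_of_exponent_le (by linarith [sq_nonneg ‖x‖]) (by linarith)
    have := (abs_le.1 (hD x)).2
    have := mul_le_mul_of_nonneg_left h1 hlam0
    have := mul_le_mul_of_nonneg_left h2 hD0
    simp only [hPdef]
    linarith
  refine ⟨fun x => P x + u x + lam, (1 - τ) * κ, κ + D + lam, (hP.add hu).add contDiff_const,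
    by positivity, by positivity, fun x hx => ?_, fun x => ⟨?_, hup x⟩, fun x hx => ?_⟩
  · rw [lap_add_const, lap_add hP hu]
    have := abs_le.1 (hlap x hx)
    rw [show 2 * (4 * τ) = ε by linarith] at this
    constructor <;> linarith [this.1, this.2]
  · have := hlow x
    rw [mul_assoc]
    simp only [hPdef] at this ⊢
    linarith
  · have hgrad : ‖gradient (fun x => P x + u x + lam) x‖ ≤ ‖fderiv ℝ P x‖ + C := by
      rw [gradient, LinearIsometryEquiv.norm_map, fderiv_add_const,
        fderiv_fun_add (hP.differentiable two_ne_zero x) (hu.differentiable two_ne_zero x)]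
      exact (norm_add_le _ _).trans (by gcongr; exact hC x)
    have hp := norm_fderiv_const_mul_one_add_norm_sq_rpow_le hκ0.le hα.le x
    have hax := hca x (subset_closure hx)
    refine (pow_le_pow_left₀ (norm_nonneg _) hgrad 2).trans ?_
    rcases le_or_gt ‖x‖ R with h | h
    · have hpM : ‖fderiv ℝ P x‖ ^ 2 ≤ M := by
        refine hp.trans ?_
        rw [hM]
        gcongr
      have hA : μ ≤ P x + u x + lam := by
        have h0 : 0 ≤ (1 - τ) * P x := by positivity
        linarith [hlow x]
      calc _ ≤ (1 + τ) * ‖fderiv ℝ P x‖ ^ 2 + (1 + 1 / τ) * C ^ 2 := sq_add_le_weighted _ _ hτ0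
        _ ≤ ε * (c * μ) := by
          rw [hμc]
          gcongr
        _ ≤ _ := by
          have : 0 ≤ a x := hc.le.trans hax
          gcongr
          linarith
    · refine sq_add_le_of_far hr0 hr1 hε hε1 hτ hκ0 ha₀ hra (hW1 x) (by positivity) hμ0 hp ?_
        (hR x h).1 ?_
      · calc (1 + 1 / τ) * C ^ 2 ≤ ε * (c * μ) := by
              rw [hμc]
              have : 0 ≤ (1 + τ) * M := by positivity
              linarith
          _ ≤ _ := by gcongr
      · rw [← one_add_sq_rpow_eq]
        exact hlow x
end
end

section
/- Let Ω ⊆ ℝ^N be an open set with smooth boundary, let a : closure(Ω) → ℝ be continuous with a ≥ 0, and let Φ ∈ C²(closure(Ω)×[0,∞)) satisfy Φ > 0 and ∂_t Φ < 0 everywhere. Let u ∈ C²(closure(Ω)×[0,∞)) be real-valued, solve u_tt − Δu + a(x) u_t = 0 on Ω×(0,∞) with u(x,t) = 0 for x ∈ ∂Ω, and suppose that for every T > 0 there is R > 0 with supp u(·,t) ⊆ B(0,R) for all t ∈ [0,T]. Then for every t > 0: d/dt [ ∫_Ω ( |∇u|² + |u_t|² ) Φ dx ] = ∫_Ω (∂_t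 Φ)^{−1} | (∂_t Φ) ∇u − u_t ∇Φ |² dx + ∫_Ω ( −2 a(x) Φ + ∂_t Φ − (∂_t Φ)^{−1} |∇Φ|² ) |u_t|² dx, where ∇ denotes the gradient in the x-variables. -/
open MeasureTheory

noncomputable section

open Set Filter Topology

/-- Extending a Lipschitz function by zero across the part of the boundary on which it vanishes
preserves the Lipschitz constant. -/
theorem LipschitzWith.indicator_of_frontier {E : Type*} [NormedAddCommGroup E] [NormedSpace ℝ E]
    {Ω : Set E} (hΩ : IsOpen Ω) {G : E → ℝ} {K : NNReal} (hG : LipschitzWith K G)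
    (h0 : ∀ x ∈ frontier Ω, G x = 0) : LipschitzWith K (Ω.indicator G) := by
  have key : ∀ x ∈ Ω, ∀ y ∉ Ω, |G x| ≤ K * dist x y := by
    intro x hx y hy
    obtain ⟨z, hz, hzf⟩ : ∃ z ∈ segment ℝ x y, z ∈ frontier Ω := by
      by_contra! h
      have hsub : segment ℝ x y ⊆ Ω ∪ (closure Ω)ᶜ := by
        intro z hz
        by_contra hz'
        simp only [mem_union, mem_compl_iff, not_or, not_not] at hz'
        exact h z hz (by rw [hΩ.frontier_eq]; exact ⟨hz'.2, hz'.1⟩)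
      have := (convex_segment (𝕜 := ℝ) x y).isPreconnected.subset_left_of_subset_union hΩ
        isClosed_closure.isOpen_compl
        (disjoint_compl_right.mono_left subset_closure) hsub ⟨x, left_mem_segment ℝ x y, hx⟩
      exact hy (this (right_mem_segment ℝ x y))
    have h1 := hG.dist_le_mul x z
    rw [h0 z hzf, dist_zero_right, Real.norm_eq_abs] at h1
    refine h1.trans (mul_le_mul_of_nonneg_left ?_ K.2)
    have := dist_add_dist_of_mem_segment hz
    linarith [dist_nonneg (x := z) (y := y)]
  refine LipschitzWith.of_dist_le_mul fun x y => ?_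
  by_cases hx : x ∈ Ω <;> by_cases hy : y ∈ Ω
  · simpa [hx, hy] using hG.dist_le_mul x y
  · simpa [hx, hy] using key x hx y hy
  · simpa [hx, hy, Real.dist_eq, dist_comm] using key y hy x hx
  · simpa [hx, hy] using mul_nonneg K.2 dist_nonneg

/-- At almost every point of a measurable set on which `w` vanishes, the derivatives of `w`
vanish too. -/
theorem ae_fderiv_apply_eq_zero_of_eqOn_zero {E : Type*} [NormedAddCommGroup E] [NormedSpace ℝ E]
    [FiniteDimensional ℝ E] [MeasurableSpace E] [BorelSpace E] (μ : Measure E)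
    [μ.IsAddHaarMeasure] {w : E → ℝ} (hw : ∀ᵐ x ∂μ, DifferentiableAt ℝ w x) {S : Set E}
    (hS : MeasurableSet S) (h0 : ∀ x ∈ S, w x = 0) (v : E) :
    ∀ᵐ x ∂μ, x ∈ S → fderiv ℝ w x v = 0 := by
  rcases eq_or_ne v 0 with rfl | hv
  · simp
  obtain ⟨D, hDsub, hDmeas, hDnull⟩ := exists_measurable_superset_of_null (ae_iff.1 hw)
  have hSD : MeasurableSet (S \ D) := hS.diff hDmeas
  have happrox : ApproximatesLinearOn (fun x => w x • v) (0 : E →L[ℝ] E) (S \ D) 0 := by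
    intro x hx y hy
    simp [h0 x hx.1, h0 y hy.1]
  have := happrox.norm_fderiv_sub_le μ hSD
    (fun x => (fderiv ℝ w x).smulRight v) fun x hx => by
      have : DifferentiableAt ℝ w x := by
        by_contra h
        exact hx.2 (hDsub h)
      exact (this.hasFDerivAt.smul_const v).hasFDerivWithinAt
  rw [ae_restrict_iff' hSD] at this
  have hD : ∀ᵐ x ∂μ, x ∉ D := measure_eq_zero_iff_ae_notMem.1 hDnull
  filter_upwards [this, hD] with x hx hxD hxS
  have h1 := hx ⟨hxS, hxD⟩
  simp only [sub_zero, nonpos_iff_eq_zero, nnnorm_eq_zero] at h1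
  have h2 := DFunLike.congr_fun h1 v
  simpa [hv] using h2

/-- A compactly supported `C¹` function vanishing on the boundary of an open set `Ω` has
directional derivatives of zero integral over `Ω`. -/
theorem setIntegral_fderiv_apply_eq_zero {E : Type*} [NormedAddCommGroup E] [NormedSpace ℝ E]
    [FiniteDimensional ℝ E] [MeasurableSpace E] [BorelSpace E] (μ : Measure E)
    [μ.IsAddHaarMeasure] {Ω : Set E} (hΩ : IsOpen Ω) {G : E → ℝ} (hG : ContDiff ℝ 1 G)
    (hc : HasCompactSupport G) (h0 : ∀ x ∈ frontier Ω, G x = 0) (v : E) :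
    ∫ x in Ω, fderiv ℝ G x v ∂μ = 0 := by
  obtain ⟨K, hK⟩ := ContDiff.lipschitzWith_of_hasCompactSupport hc hG one_ne_zero
  have hw : LipschitzWith K (Ω.indicator G) := hK.indicator_of_frontier hΩ h0
  have hwc : HasCompactSupport (Ω.indicator G) :=
    hc.mono fun x hx => by
      have := mem_of_indicator_ne_zero (f := G) hx
      simpa [this] using hx
  have hint := (LipschitzWith.const (1 : ℝ)).integral_lineDeriv_mul_eq (μ := μ) hw hwc (-v)
  have hl : ∀ x : E, lineDeriv ℝ (fun _ : E => (1 : ℝ)) x (-v) = 0 := fun x => by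
    simp [lineDeriv]
  simp only [hl, zero_mul, integral_zero, neg_neg, mul_one] at hint
  rw [← integral_indicator hΩ.measurableSet, hint]
  have hdiff := hw.ae_differentiableAt (μ := μ)
  refine integral_congr_ae ?_
  filter_upwards [hdiff, ae_fderiv_apply_eq_zero_of_eqOn_zero μ hdiff hΩ.measurableSet.compl
    (fun x hx => indicator_of_notMem hx G) v] with x hx hx0
  rw [hx.lineDeriv_eq_fderiv]
  by_cases hxΩ : x ∈ Ω
  · rw [indicator_of_mem hxΩ]
    have : Ω.indicator G =ᶠ[𝓝 x] G := by
      filter_upwards [hΩ.mem_nhds hxΩ] with y hy using indicator_of_mem hy G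
    rw [this.fderiv_eq]
  · rw [indicator_of_notMem hxΩ, hx0 hxΩ]

section Slices

variable {E : Type*} [NormedAddCommGroup E] [NormedSpace ℝ E] {f : E × ℝ → ℝ}

theorem hasDerivAt_slice (hf : Differentiable ℝ f) (x : E) (t : ℝ) :
    HasDerivAt (fun s => f (x, s)) (fderiv ℝ f (x, t) (0, 1)) t :=
  (hf (x, t)).hasFDerivAt.comp_hasDerivAt t ((hasDerivAt_const t x).prodMk (hasDerivAt_id t))

theorem hasFDerivAt_slice (hf : Differentiable ℝ f) (x : E) (t : ℝ) :
    HasFDerivAt (fun y => f (y, t)) ((fderiv ℝ f (x, t)).comp (.inl ℝ E ℝ)) x :=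
  (hf (x, t)).hasFDerivAt.comp x (hasFDerivAt_prodMk_left x t)

theorem fderiv_slice_apply (hf : Differentiable ℝ f) (x : E) (t : ℝ) (v : E) :
    fderiv ℝ (fun y => f (y, t)) x v = fderiv ℝ f (x, t) (v, 0) := by
  rw [(hasFDerivAt_slice hf x t).fderiv]
  simp

theorem contDiff_fderiv_apply_const_s15 (hf : ContDiff ℝ 2 f) (v : E × ℝ) :
    ContDiff ℝ 1 fun p => fderiv ℝ f p v :=
  (hf.fderiv_right (m := 1) (by norm_num)).clm_apply contDiff_const

theorem fderiv_fderiv_apply_comm (hf : ContDiff ℝ 2 f) (p v w : E × ℝ) :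
    fderiv ℝ (fun q => fderiv ℝ f q v) p w = fderiv ℝ (fun q => fderiv ℝ f q w) p v := by
  have hd : DifferentiableAt ℝ (fderiv ℝ f) p :=
    (hf.fderiv_right (m := 1) (by norm_num)).differentiable one_ne_zero p
  have hs : IsSymmSndFDerivAt ℝ f p := hf.contDiffAt.isSymmSndFDerivAt (by simp)
  have key : ∀ a b : E × ℝ, fderiv ℝ (fun q => fderiv ℝ f q a) p b
      = fderiv ℝ (fderiv ℝ f) p b a := fun a b => by
    rw [fderiv_clm_apply hd (differentiableAt_const a)]
    simp
  rw [key, key, hs.eq]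

/-- Differentiation under the integral sign for a `C¹` integrand whose spatial support is
contained in a compact set, uniformly near the time `t`. -/
theorem hasDerivAt_setIntegral_slice [MeasurableSpace E] [BorelSpace E]
    [SecondCountableTopology E] (μ : Measure E) [IsLocallyFiniteMeasure μ] (Ω : Set E)
    (hf : ContDiff ℝ 1 f) {K : Set E} (hK : IsCompact K) {I : Set ℝ} (hI : IsOpen I)
    (h0 : ∀ x ∉ K, ∀ s ∈ I, f (x, s) = 0) {t : ℝ} (ht : t ∈ I) :
    HasDerivAt (fun s => ∫ x in Ω, f (x, s) ∂μ)
      (∫ x in Ω, fderiv ℝ f (x, t) (0, 1) ∂μ) t := by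
  have hdf : Differentiable ℝ f := hf.differentiable one_ne_zero
  have hc' : Continuous fun p : E × ℝ => fderiv ℝ f p (0, 1) :=
    (hf.continuous_fderiv one_ne_zero).clm_apply continuous_const
  obtain ⟨ε, hε, hεI⟩ := Metric.nhds_basis_closedBall.mem_iff.1 (hI.mem_nhds ht)
  obtain ⟨C, hC⟩ := (hK.prod (isCompact_closedBall t ε)).exists_bound_of_continuousOn
    hc'.continuousOn
  have hzero : ∀ x ∉ K, ∀ s ∈ I, fderiv ℝ f (x, s) (0, 1) = 0 := fun x hx s hs => by
    have h1 : (fun r => f (x, r)) =ᶠ[𝓝 s] fun _ => (0 : ℝ) := by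
      filter_upwards [hI.mem_nhds hs] with r hr using h0 x hx r hr
    rw [← (hasDerivAt_slice hdf x s).deriv, h1.deriv_eq, deriv_const]
  refine (hasDerivAt_integral_of_dominated_loc_of_deriv_le
    (F := fun s x => f (x, s)) (F' := fun s x => fderiv ℝ f (x, s) (0, 1))
    (bound := K.indicator fun _ => C)
    (Metric.closedBall_mem_nhds t hε) (Eventually.of_forall fun s => ?_) ?_ ?_ ?_ ?_ ?_).2
  · exact (hf.continuous.comp (by fun_prop)).aestronglyMeasurable
  · have hft : Continuous fun x : E => f (x, t) := hf.continuous.comp (by fun_prop)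
    exact (hft.integrable_of_hasCompactSupport
      (HasCompactSupport.intro hK fun x hx => h0 x hx t ht)).integrableOn
  · exact (hc'.comp (by fun_prop : Continuous fun x : E => (x, t))).aestronglyMeasurable
  · refine Eventually.of_forall fun x s hs => ?_
    by_cases hx : x ∈ K
    · rw [indicator_of_mem hx]
      exact hC (x, s) ⟨hx, hs⟩
    · rw [indicator_of_notMem hx, hzero x hx s (hεI hs), norm_zero]
  · exact ((integrable_indicator_iff hK.measurableSet).2
      (integrableOn_const hK.measure_lt_top.ne)).integrableOn
  · exact Eventually.of_forall fun x s _ => hasDerivAt_slice hdf x s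

end Slices

theorem ContinuousOn.integrableOn_of_closure {E : Type*} [TopologicalSpace E] [T2Space E]
    [MeasurableSpace E] [BorelSpace E] {μ : Measure E}
    [IsFiniteMeasureOnCompacts μ] {Ω K : Set E} (hΩ : MeasurableSet Ω) (hK : IsCompact K)
    {f : E → ℝ} (hf : ContinuousOn f (closure Ω)) (h0 : ∀ x ∉ K, f x = 0) :
    IntegrableOn f Ω μ := by
  have h1 : IntegrableOn f (closure Ω ∩ K) μ :=
    (hf.mono inter_subset_left).integrableOn_compact' (hK.inter_left isClosed_closure)
      (isClosed_closure.measurableSet.inter hK.measurableSet)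
  exact h1.of_forall_sdiff_eq_zero hΩ fun x hx =>
    h0 x fun hxK => hx.2 ⟨subset_closure hx.1, hxK⟩

theorem gradient_euclidean_apply {N : ℕ} (f : EuclideanSpace ℝ (Fin N) → ℝ)
    (x : EuclideanSpace ℝ (Fin N)) (i : Fin N) :
    gradient f x i = fderiv ℝ f x (EuclideanSpace.single i 1) := by
  rw [← inner_gradient_left, EuclideanSpace.inner_single_right]
  simp

theorem deriv_slice_apply {E : Type*} [NormedAddCommGroup E] [NormedSpace ℝ E] {f : E × ℝ → ℝ}
    (hf : Differentiable ℝ f) (x : E) (t : ℝ) :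
    deriv (fun s => f (x, s)) t = fderiv ℝ f (x, t) (0, 1) :=
  (hasDerivAt_slice hf x t).deriv

theorem inv_mul_sum_sq_sub_mul {ι : Type*} (s : Finset ι) (p φ : ι → ℝ) {c : ℝ} (hc : c ≠ 0)
    (d : ℝ) :
    c⁻¹ * ∑ i ∈ s, (c * p i - d * φ i) ^ 2
      = c * ∑ i ∈ s, p i ^ 2 - 2 * d * ∑ i ∈ s, p i * φ i + c⁻¹ * d ^ 2 * ∑ i ∈ s, φ i ^ 2 := by
  simp only [Finset.mul_sum, ← Finset.sum_sub_distrib, ← Finset.sum_add_distrib]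
  refine Finset.sum_congr rfl fun i _ => ?_
  field_simp
  ring

section Coordinates

variable {N : ℕ} {U P : EuclideanSpace ℝ (Fin N) × ℝ → ℝ}

theorem norm_gradient_slice_sq (hU : Differentiable ℝ U) (x : EuclideanSpace ℝ (Fin N)) (t : ℝ) :
    ‖gradient (fun y => U (y, t)) x‖ ^ 2
      = ∑ i, (fderiv ℝ U (x, t) (EuclideanSpace.single i 1, 0)) ^ 2 := by
  simp only [EuclideanSpace.real_norm_sq_eq, gradient_euclidean_apply, fderiv_slice_apply hU]

theorem norm_smul_gradient_slice_sub_sq (hU : Differentiable ℝ U) (hP : Differentiable ℝ P)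
    (x : EuclideanSpace ℝ (Fin N)) (t c d : ℝ) :
    ‖c • gradient (fun y => U (y, t)) x - d • gradient (fun y => P (y, t)) x‖ ^ 2
      = ∑ i, (c * fderiv ℝ U (x, t) (EuclideanSpace.single i 1, 0)
          - d * fderiv ℝ P (x, t) (EuclideanSpace.single i 1, 0)) ^ 2 := by
  simp only [EuclideanSpace.real_norm_sq_eq, PiLp.sub_apply, PiLp.smul_apply, smul_eq_mul,
    gradient_euclidean_apply, fderiv_slice_apply hU, fderiv_slice_apply hP]

theorem lap_slice (hU : ContDiff ℝ 2 U) (x : EuclideanSpace ℝ (Fin N)) (t : ℝ) :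
    lap (fun y => U (y, t)) x
      = ∑ i, fderiv ℝ (fun q => fderiv ℝ U q (EuclideanSpace.single i 1, 0)) (x, t)
          (EuclideanSpace.single i 1, 0) := by
  refine Finset.sum_congr rfl fun i _ => ?_
  simp only [fderiv_slice_apply (hU.differentiable two_ne_zero)]
  exact fderiv_slice_apply ((contDiff_fderiv_apply_const_s15 hU _).differentiable one_ne_zero) x t _

theorem deriv_deriv_slice (hU : ContDiff ℝ 2 U) (x : EuclideanSpace ℝ (Fin N)) (t : ℝ) :
    deriv (deriv fun s => U (x, s)) t = fderiv ℝ (fun q => fderiv ℝ U q (0, 1)) (x, t) (0, 1) := by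
  have : (deriv fun s => U (x, s)) = fun s => fderiv ℝ U (x, s) (0, 1) :=
    funext fun s => deriv_slice_apply (hU.differentiable two_ne_zero) x s
  rw [this]
  exact deriv_slice_apply ((contDiff_fderiv_apply_const_s15 hU (0, 1)).differentiable one_ne_zero) x t

/-- The time derivative of the weighted energy density. -/
theorem hasDerivAt_energyDensity (hU : ContDiff ℝ 2 U) (hP : Differentiable ℝ P)
    (x : EuclideanSpace ℝ (Fin N)) (t : ℝ) :
    HasDerivAt
      (fun s => (∑ i, (fderiv ℝ U (x, s) (EuclideanSpace.single i 1, 0)) ^ 2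
        + (fderiv ℝ U (x, s) (0, 1)) ^ 2) * P (x, s))
      (2 * (∑ i, fderiv ℝ U (x, t) (EuclideanSpace.single i 1, 0)
            * fderiv ℝ (fun q => fderiv ℝ U q (0, 1)) (x, t) (EuclideanSpace.single i 1, 0)
          + fderiv ℝ U (x, t) (0, 1) * fderiv ℝ (fun q => fderiv ℝ U q (0, 1)) (x, t) (0, 1))
          * P (x, t)
        + (∑ i, (fderiv ℝ U (x, t) (EuclideanSpace.single i 1, 0)) ^ 2
          + (fderiv ℝ U (x, t) (0, 1)) ^ 2) * fderiv ℝ P (x, t) (0, 1)) t := by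
  have hd : ∀ v, Differentiable ℝ fun q => fderiv ℝ U q v := fun v =>
    (contDiff_fderiv_apply_const_s15 hU v).differentiable one_ne_zero
  have h1 : HasDerivAt (fun s => ∑ i, (fderiv ℝ U (x, s) (EuclideanSpace.single i 1, 0)) ^ 2) _ t :=
    HasDerivAt.fun_sum (u := Finset.univ) fun i _ =>
      (hasDerivAt_slice (hd _) x t).fun_pow 2
  have h2 := (hasDerivAt_slice (hd (0, 1)) x t).fun_pow 2
  refine ((h1.fun_add h2).fun_mul (hasDerivAt_slice hP x t)).congr_deriv ?_
  simp only [fderiv_fderiv_apply_comm hU _ _ (0, 1), mul_add, Finset.mul_sum]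
  norm_num [mul_assoc]

/-- The `i`-th term of the divergence of `Φ u_t ∇u`. -/
theorem fderiv_flux (hU : ContDiff ℝ 2 U) (hP : Differentiable ℝ P)
    (x : EuclideanSpace ℝ (Fin N)) (t : ℝ) (i : Fin N) :
    fderiv ℝ (fun y => P (y, t) * fderiv ℝ U (y, t) (0, 1)
        * fderiv ℝ U (y, t) (EuclideanSpace.single i 1, 0)) x (EuclideanSpace.single i 1)
      = fderiv ℝ P (x, t) (EuclideanSpace.single i 1, 0) * fderiv ℝ U (x, t) (0, 1)
          * fderiv ℝ U (x, t) (EuclideanSpace.single i 1, 0)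
        + P (x, t) * fderiv ℝ (fun q => fderiv ℝ U q (0, 1)) (x, t) (EuclideanSpace.single i 1, 0)
          * fderiv ℝ U (x, t) (EuclideanSpace.single i 1, 0)
        + P (x, t) * fderiv ℝ U (x, t) (0, 1)
          * fderiv ℝ (fun q => fderiv ℝ U q (EuclideanSpace.single i 1, 0)) (x, t)
            (EuclideanSpace.single i 1, 0) := by
  have hd : ∀ v, Differentiable ℝ fun q => fderiv ℝ U q v := fun v =>
    (contDiff_fderiv_apply_const_s15 hU v).differentiable one_ne_zero
  have h := ((hasFDerivAt_slice hP x t).fun_mul (hasFDerivAt_slice (hd (0, 1)) x t)).fun_mul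
    (hasFDerivAt_slice (hd (EuclideanSpace.single i 1, 0)) x t)
  rw [h.fderiv]
  simp
  ring

end Coordinates

/-- the first weighted energy identity (Lemma 4.2 of the paper):
`d/dt ∫_Ω (|∇u|² + u_t²) Φ dx
  = ∫_Ω (∂_tΦ)⁻¹ |(∂_tΦ)∇u − u_t ∇Φ|² dx
    + ∫_Ω (−2aΦ + ∂_tΦ − (∂_tΦ)⁻¹|∇Φ|²) u_t² dx`. -/
theorem stmt_15 (N : ℕ) (Ω : Set (EuclideanSpace ℝ (Fin N)))
    (hΩopen : IsOpen Ω) (hΩbdry : HasSmoothBoundary Ω)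
    (a : EuclideanSpace ℝ (Fin N) → ℝ) (ha : ContinuousOn a (closure Ω))
    (hapos : ∀ x ∈ closure Ω, 0 ≤ a x)
    (Φ : EuclideanSpace ℝ (Fin N) → ℝ → ℝ)
    (hΦ : ContDiff ℝ 2 (Function.uncurry Φ))
    (hΦpos : ∀ x ∈ closure Ω, ∀ t ≥ (0 : ℝ), 0 < Φ x t)
    (hΦt : ∀ x ∈ closure Ω, ∀ t ≥ (0 : ℝ), deriv (Φ x) t < 0)
    (u : EuclideanSpace ℝ (Fin N) → ℝ → ℝ)
    (hu : ContDiff ℝ 2 (Function.uncurry u))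
    (hupde : ∀ x ∈ Ω, ∀ t > (0 : ℝ),
      deriv (deriv (u x)) t - lap (fun y => u y t) x + a x * deriv (u x) t = 0)
    (hubdry : ∀ x ∈ frontier Ω, ∀ t > (0 : ℝ), u x t = 0)
    (husupp : ∀ T > (0 : ℝ), ∃ R > (0 : ℝ), ∀ t ∈ Set.Icc (0 : ℝ) T,
      tsupport (fun x => u x t) ⊆ Metric.ball (0 : EuclideanSpace ℝ (Fin N)) R) :
    ∀ t > (0 : ℝ),
      HasDerivAt
        (fun s => ∫ x in Ω,
          (‖gradient (fun y => u y s) x‖ ^ 2 + (deriv (u x) s) ^ 2) * Φ x s)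
        ((∫ x in Ω, (deriv (Φ x) t)⁻¹
            * ‖(deriv (Φ x) t) • gradient (fun y => u y t) x
                - (deriv (u x) t) • gradient (fun y => Φ y t) x‖ ^ 2)
          + ∫ x in Ω,
            (-2 * a x * Φ x t + deriv (Φ x) t
              - (deriv (Φ x) t)⁻¹ * ‖gradient (fun y => Φ y t) x‖ ^ 2)
              * (deriv (u x) t) ^ 2)
        t := by
  intro t ht
  obtain ⟨U, rfl⟩ : ∃ U : EuclideanSpace ℝ (Fin N) × ℝ → ℝ, u = fun x s => U (x, s) :=
    ⟨Function.uncurry u, rfl⟩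
  obtain ⟨P, rfl⟩ : ∃ P : EuclideanSpace ℝ (Fin N) × ℝ → ℝ, Φ = fun x s => P (x, s) :=
    ⟨Function.uncurry Φ, rfl⟩
  change ContDiff ℝ 2 P at hΦ
  change ContDiff ℝ 2 U at hu
  have hUd : Differentiable ℝ U := hu.differentiable two_ne_zero
  have hPd : Differentiable ℝ P := hΦ.differentiable two_ne_zero
  have hUv : ∀ v, ContDiff ℝ 1 fun q => fderiv ℝ U q v := contDiff_fderiv_apply_const_s15 hu
  have hPv : ∀ v, ContDiff ℝ 1 fun q => fderiv ℝ P q v := contDiff_fderiv_apply_const_s15 hΦ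
  have hsl : ContDiff ℝ 1 fun x : EuclideanSpace ℝ (Fin N) => (x, t) :=
    contDiff_id.prodMk contDiff_const
  simp only [norm_gradient_slice_sq hUd, norm_gradient_slice_sq hPd,
    norm_smul_gradient_slice_sub_sq hUd hPd, deriv_slice_apply hUd, deriv_slice_apply hPd]
    at hΦt ⊢
  simp only [lap_slice hu, deriv_deriv_slice hu, deriv_slice_apply hUd] at hupde
  obtain ⟨R, -, hR⟩ := husupp (t + 1) (by linarith)
  set K : Set (EuclideanSpace ℝ (Fin N)) := Metric.closedBall 0 R
  have hK : IsCompact K := isCompact_closedBall 0 R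
  have hU0 : ∀ x ∉ K, ∀ s ∈ Ioo 0 (t + 1), U (x, s) = 0 := fun x hx s hs => by
    by_contra h
    exact hx (Metric.ball_subset_closedBall
      (hR s (Ioo_subset_Icc_self hs) (subset_tsupport (fun y => U (y, s)) h)))
  have hdU0 : ∀ x ∉ K, ∀ s ∈ Ioo 0 (t + 1), fderiv ℝ U (x, s) = 0 := fun x hx s hs => by
    have : U =ᶠ[𝓝 (x, s)] fun _ => (0 : ℝ) := by
      filter_upwards [(hK.isClosed.isOpen_compl.prod isOpen_Ioo).mem_nhds
        (show (x, s) ∈ Kᶜ ×ˢ Ioo 0 (t + 1) from ⟨hx, hs⟩)] with p hp using hU0 p.1 hp.1 p.2 hp.2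
    rw [this.fderiv_eq, fderiv_fun_const, Pi.zero_apply]
  have htI : t ∈ Ioo 0 (t + 1) := ⟨ht, by linarith⟩
  -- differentiate under the integral sign
  have hF : ContDiff ℝ 1 fun p : EuclideanSpace ℝ (Fin N) × ℝ =>
      (∑ i, (fderiv ℝ U p (EuclideanSpace.single i 1, 0)) ^ 2 + (fderiv ℝ U p (0, 1)) ^ 2)
        * P p :=
    ((ContDiff.sum fun i _ => (hUv _).pow 2).add ((hUv _).pow 2)).mul (hΦ.of_le one_le_two)
  refine (hasDerivAt_setIntegral_slice volume Ω hF hK isOpen_Ioo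
    (fun x hx s hs => by simp [hdU0 x hx s hs]) htI).congr_deriv ?_
  have hFt := fun x : EuclideanSpace ℝ (Fin N) =>
    (hasDerivAt_slice (hF.differentiable one_ne_zero) x t).unique
      (hasDerivAt_energyDensity hu hPd x t)
  simp only [hFt]
  -- the flux `Φ u_t ∇u` has zero total divergence
  let G : Fin N → EuclideanSpace ℝ (Fin N) → ℝ := fun i y =>
    P (y, t) * fderiv ℝ U (y, t) (0, 1) * fderiv ℝ U (y, t) (EuclideanSpace.single i 1, 0)
  have hG : ∀ i, ContDiff ℝ 1 (G i) := fun i =>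
    (((hΦ.of_le one_le_two).comp hsl).mul ((hUv _).comp hsl)).mul ((hUv _).comp hsl)
  have hGc : ∀ i, HasCompactSupport (G i) := fun i =>
    HasCompactSupport.intro hK fun x hx => by simp [G, hdU0 x hx t htI]
  have hG0 : ∀ i, ∀ x ∈ frontier Ω, G i x = 0 := fun i x hx => by
    have h1 : (fun s => U (x, s)) =ᶠ[𝓝 t] fun _ => (0 : ℝ) := by
      filter_upwards [Ioi_mem_nhds ht] with s hs using hubdry x hx s hs
    have h2 : fderiv ℝ U (x, t) (0, 1) = 0 := by
      rw [← deriv_slice_apply hUd, h1.deriv_eq, deriv_const]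
    simp [G, h2]
  have hGint : ∀ i, IntegrableOn
      (fun x => fderiv ℝ (G i) x (EuclideanSpace.single i 1)) Ω := fun i =>
    ((((hG i).continuous_fderiv one_ne_zero).clm_apply
      continuous_const).integrable_of_hasCompactSupport
        ((hGc i).fderiv_apply ℝ _)).integrableOn
  have hdiv : ∫ x in Ω, 2 * ∑ i, fderiv ℝ (G i) x (EuclideanSpace.single i 1) = 0 := by
    rw [integral_const_mul, integral_finsetSum _ fun i _ => hGint i]
    simp [setIntegral_fderiv_apply_eq_zero volume hΩopen (hG _) (hGc _) (hG0 _)]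
  have hcU : ∀ v, Continuous fun x => fderiv ℝ U (x, t) v := fun v =>
    (hUv v).continuous.comp hsl.continuous
  have hcP : ∀ v, Continuous fun x => fderiv ℝ P (x, t) v := fun v =>
    (hPv v).continuous.comp hsl.continuous
  have hcinv : ContinuousOn (fun x => (fderiv ℝ P (x, t) (0, 1))⁻¹) (closure Ω) :=
    (hcP _).continuousOn.inv₀ fun x hx => (hΦt x hx t ht.le).ne
  have hcP0 : Continuous fun x => P (x, t) := hΦ.continuous.comp hsl.continuous
  have hA : IntegrableOn (fun x => (fderiv ℝ P (x, t) (0, 1))⁻¹ *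
      ∑ i, (fderiv ℝ P (x, t) (0, 1) * fderiv ℝ U (x, t) (EuclideanSpace.single i 1, 0)
        - fderiv ℝ U (x, t) (0, 1) * fderiv ℝ P (x, t) (EuclideanSpace.single i 1, 0)) ^ 2) Ω := by
    refine ContinuousOn.integrableOn_of_closure hΩopen.measurableSet hK (hcinv.mul ?_)
      fun x hx => by simp [hdU0 x hx t htI]
    exact Continuous.continuousOn (by fun_prop)
  have hB : IntegrableOn (fun x => (-2 * a x * P (x, t) + fderiv ℝ P (x, t) (0, 1)
      - (fderiv ℝ P (x, t) (0, 1))⁻¹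
        * ∑ i, (fderiv ℝ P (x, t) (EuclideanSpace.single i 1, 0)) ^ 2)
      * (fderiv ℝ U (x, t) (0, 1)) ^ 2) Ω := by
    refine ContinuousOn.integrableOn_of_closure hΩopen.measurableSet hK ?_
      fun x hx => by simp [hdU0 x hx t htI]
    have hs : ContinuousOn (fun x => ∑ i, (fderiv ℝ P (x, t) (EuclideanSpace.single i 1, 0)) ^ 2)
        (closure Ω) := Continuous.continuousOn (by fun_prop)
    exact ((((continuousOn_const.mul ha).mul hcP0.continuousOn).add (hcP _).continuousOn).sub
      (hcinv.mul hs)).mul ((hcU _).pow 2).continuousOn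
  have hD : IntegrableOn (fun x => 2 * ∑ i, fderiv ℝ (G i) x (EuclideanSpace.single i 1)) Ω :=
    (integrable_finsetSum _ fun i _ => hGint i).const_mul 2
  rw [← integral_add hA hB]
  refine Eq.trans ?_ ((integral_add (hA.add hB) hD).trans (by rw [hdiv, add_zero]; rfl))
  refine setIntegral_congr_fun hΩopen.measurableSet fun x hx => ?_
  have hne : fderiv ℝ P (x, t) (0, 1) ≠ 0 := (hΦt x (subset_closure hx) t ht.le).ne
  have hwave : fderiv ℝ (fun q => fderiv ℝ U q (0, 1)) (x, t) (0, 1)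
      = ∑ i, fderiv ℝ (fun q => fderiv ℝ U q (EuclideanSpace.single i 1, 0)) (x, t)
          (EuclideanSpace.single i 1, 0) - a x * fderiv ℝ U (x, t) (0, 1) := by
    linarith [hupde x hx t ht]
  have hsum : ∑ i, fderiv ℝ (G i) x (EuclideanSpace.single i 1)
      = fderiv ℝ U (x, t) (0, 1) * ∑ i, fderiv ℝ U (x, t) (EuclideanSpace.single i 1, 0)
          * fderiv ℝ P (x, t) (EuclideanSpace.single i 1, 0)
        + P (x, t) * ∑ i, fderiv ℝ U (x, t) (EuclideanSpace.single i 1, 0)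
          * fderiv ℝ (fun q => fderiv ℝ U q (0, 1)) (x, t) (EuclideanSpace.single i 1, 0)
        + P (x, t) * fderiv ℝ U (x, t) (0, 1)
          * ∑ i, fderiv ℝ (fun q => fderiv ℝ U q (EuclideanSpace.single i 1, 0)) (x, t)
            (EuclideanSpace.single i 1, 0) := by
    simp only [Finset.mul_sum, ← Finset.sum_add_distrib]
    refine Finset.sum_congr rfl fun i _ => ?_
    rw [fderiv_flux hu hPd x t i]
    ring
  simp only [Pi.add_apply, hsum, hwave, inv_mul_sum_sq_sub_mul _ _ _ hne]
  ring
end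
end
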